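/- arXiv:2003.10389 — 3 statements merged into one kernel-verified Lean document; each statement's English description precedes it below -/
import Mathlib

section
/- Let δ>0 and s ∈ (0,1). The derivative d/dr G_δ(s,r), defined for r ∈ (s,1), has a limit as r decreases to s, and lim_{r↓s} d/dr G_δ(s,r) = −δ·s + (δ−1)/2. -/
open MeasureTheory Real Filter

/-- Ascending Pochhammer symbol `(a)_k = a(a+1)⋯(a+k-1)`. -/
noncomputable def poch (a : ℝ) (k : ℕ) : ℝ := ∏ i ∈ Finset.range k, (a + i)

/-- Gauss hypergeometric function `₂F₁(a,b,c,z) = ∑ (a)_k (b)_k / (k! (c)_k) z^k`. -/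
noncomputable def hyp2F1 (a b c z : ℝ) : ℝ :=
  ∑' k : ℕ, (poch a k * poch b k) / ((Nat.factorial k : ℝ) * poch c k) * z ^ k

/-- `K(δ) = 2 Γ((δ+1)/2)² / Γ(δ/2)²`. -/
noncomputable def Kcoef (δ : ℝ) : ℝ :=
  2 * Real.Gamma ((δ + 1) / 2) ^ 2 / Real.Gamma (δ / 2) ^ 2

/-- Two-point kernel `G_δ(s,r)`, equal to the second moment `E^δ[X_s X_r]` of a
δ-dimensional Bessel bridge from 0 to 0 over [0,1]. -/
noncomputable def twoPt (δ s r : ℝ) : ℝ :=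
  if s < r then
    Kcoef δ * (r - s) ^ (δ / 2 + 1) * (s * (1 - r)) ^ ((1 : ℝ) / 2) *
      (r * (1 - s)) ^ (-((δ + 1) / 2)) *
      hyp2F1 ((δ + 1) / 2) ((δ + 1) / 2) (δ / 2) (s * (1 - r) / (r * (1 - s)))
  else
    Kcoef δ * (s - r) ^ (δ / 2 + 1) * (r * (1 - s)) ^ ((1 : ℝ) / 2) *
      (s * (1 - r)) ^ (-((δ + 1) / 2)) *
      hyp2F1 ((δ + 1) / 2) ((δ + 1) / 2) (δ / 2) (r * (1 - s) / (s * (1 - r)))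

/-- Coefficient `D(s,r)`. -/
noncomputable def Dcoef (s r : ℝ) : ℝ :=
  if s < r then (1 - s) / ((r - s) * (1 - r)) else s / (r * (s - r))

/-- Coefficient `C_k = Γ(k+(δ+1)/2)/(Γ(δ/2) Γ(k+δ/2) k!)`. -/
noncomputable def Ccoef (δ : ℝ) (k : ℕ) : ℝ :=
  Real.Gamma ((k : ℝ) + (δ + 1) / 2) /
    (Real.Gamma (δ / 2) * Real.Gamma ((k : ℝ) + δ / 2) * (Nat.factorial k : ℝ))

/-- Coefficient `f_k(s,r)`. -/
noncomputable def fcoef (s r : ℝ) (k : ℕ) : ℝ :=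
  if s < r then (2 * (r - s)) ^ ((1 : ℝ) / 2 - (k : ℝ)) * (s / r) ^ ((k : ℝ) + 1 / 2)
  else (2 * (s - r)) ^ ((1 : ℝ) / 2 - (k : ℝ)) * ((1 - s) / (1 - r)) ^ ((k : ℝ) + 1 / 2)

/-- `Σ^δ_{r,s}(b) = Σ^δ_r(X_s | b)`, the density-weighted conditional expectation of a
δ-dimensional Bessel bridge. -/
noncomputable def SigmaRS (δ r s b : ℝ) : ℝ :=
  ((2 : ℝ) ^ (δ / 2 - 1) * (r * (1 - r)) ^ (δ / 2))⁻¹ *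
    Real.exp (-(Dcoef s r) * b ^ 2 / 2) *
    ∑' k : ℕ, Ccoef δ k * fcoef s r k * b ^ (2 * k)

/-!
The Euler transformation `F(a, b; c; z) = (1 - z) ^ (c - a - b) F(c - a, c - b; c; z)` cancels the
factor of `G_δ(s, r)` that degenerates on the diagonal: for `s < r`,
`G_δ(s, r) = K(δ) √(s(1 - s)r(1 - r)) F(-1/2, -1/2; δ/2; z(s, r))`.
Here `c - a - b > 1`, so both `F` and `F'` extend continuously to `z = 1`, the limit of `z(s, r)` as
`r ↓ s`; by Gauss's summation theorem `K(δ)` times `F(-1/2, -1/2; δ/2; 1)` and times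
`F(1/2, 1/2; δ/2 + 1; 1)` both equal `δ`, and the limit follows by differentiating the product.

Gauss's theorem comes from the contiguity relation between `c` and `c + 1` at `z = 1` (a telescoping
sum), iterated along `c + n → ∞` and compared with Euler's limit formula for `Γ`. For the Euler
transformation, multiplication by `(1 - X) ^ (c - a - b)` intertwines the two hypergeometric
operators on formal power series, and a solution of the hypergeometric equation with `c` not a
nonpositive integer is determined by its constant coefficient.
-/

open scoped Topology Nat

section Pochhammer

@[simp]
lemma poch_zero (a : ℝ) : poch a 0 = 1 := by simp [poch]

lemma poch_succ (a : ℝ) (k : ℕ) : poch a (k + 1) = poch a k * (a + k) :=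
  Finset.prod_range_succ _ _

lemma poch_eq_ascPochhammer_eval (a : ℝ) (k : ℕ) : poch a k = (ascPochhammer ℝ k).eval a := by
  induction k with
  | zero => simp
  | succ k ih => rw [poch_succ, ih, ascPochhammer_succ_eval]

lemma poch_succ_left (a : ℝ) (k : ℕ) : poch a (k + 1) = a * poch (a + 1) k := by
  simp [poch_eq_ascPochhammer_eval, ascPochhammer_succ_left]

lemma poch_pos {c : ℝ} (hc : 0 < c) (k : ℕ) : 0 < poch c k :=
  Finset.prod_pos fun i _ ↦ by positivity

lemma poch_le_poch {c d : ℝ} (hc : 0 ≤ c) (h : c ≤ d) (k : ℕ) : poch c k ≤ poch d k :=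
  Finset.prod_le_prod (fun i _ ↦ by positivity) fun i _ ↦ by gcongr

lemma tendsto_poch_succ_atTop (k : ℕ) : Tendsto (fun x ↦ poch x (k + 1)) atTop atTop := by
  induction k with
  | zero => exact tendsto_id.congr fun x ↦ by simp [poch]
  | succ k ih =>
    simp_rw [poch_succ _ (k + 1)]
    exact ih.atTop_mul_atTop₀ (tendsto_atTop_add_const_right _ _ tendsto_id)

lemma tendsto_poch_succ_div_rpow_mul_factorial (a : ℝ) :
    Tendsto (fun n : ℕ ↦ poch a (n + 1) / ((n : ℝ) ^ a * n !)) atTop (𝓝 (Gamma a)⁻¹) := by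
  by_cases ha : Gamma a = 0
  · -- At the poles of `Γ`, Mathlib's `Γ(a) = 0` and `0⁻¹ = 0` give the true value of `1/Γ`.
    obtain ⟨m, rfl⟩ := (Gamma_eq_zero_iff a).1 ha
    rw [ha, inv_zero]
    refine tendsto_const_nhds.congr' ?_
    filter_upwards [eventually_ge_atTop m] with n hn
    have hpoch : poch (-m) (n + 1) = 0 :=
      Finset.prod_eq_zero (Finset.mem_range.2 (Nat.lt_succ_of_le hn)) (neg_add_cancel _)
    rw [hpoch, zero_div]
  · exact ((GammaSeq_tendsto_Gamma a).inv₀ ha).congr fun n ↦ inv_div _ _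

lemma add_natCast_ne_neg_natCast {c : ℝ} (hc : ∀ n : ℕ, c ≠ -n) (m n : ℕ) : c + m ≠ -n :=
  fun h ↦ hc (m + n) (by push_cast; linarith)

lemma ne_neg_natCast_of_pos {c : ℝ} (hc : 0 < c) (n : ℕ) : c ≠ -n :=
  ((neg_nonpos.2 n.cast_nonneg).trans_lt hc).ne'

end Pochhammer

section HypergeometricCoefficients

/-- The coefficient `(a)_k (b)_k / (k! (c)_k)` of `z ^ k` in the series `hyp2F1 a b c z`. -/
noncomputable def hyp2F1Coeff (a b c : ℝ) (k : ℕ) : ℝ :=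
  poch a k * poch b k / (k ! * poch c k)

lemma hyp2F1_eq_tsum (a b c z : ℝ) : hyp2F1 a b c z = ∑' k, hyp2F1Coeff a b c k * z ^ k := rfl

lemma hyp2F1_one (a b c : ℝ) : hyp2F1 a b c 1 = ∑' k, hyp2F1Coeff a b c k := by
  simp [hyp2F1_eq_tsum]

variable (a b c : ℝ)

@[simp]
lemma hyp2F1Coeff_zero : hyp2F1Coeff a b c 0 = 1 := by simp [hyp2F1Coeff]

lemma hyp2F1Coeff_succ (k : ℕ) :
    hyp2F1Coeff a b c (k + 1) = (a + k) * (b + k) / ((k + 1) * (c + k)) * hyp2F1Coeff a b c k := by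
  simp only [hyp2F1Coeff, poch_succ, Nat.factorial_succ, div_mul_div_comm]
  push_cast
  congr 1 <;> ring

lemma succ_mul_hyp2F1Coeff_succ (k : ℕ) :
    (k + 1) * hyp2F1Coeff a b c (k + 1) = a * b / c * hyp2F1Coeff (a + 1) (b + 1) (c + 1) k := by
  have hk : (k : ℝ) + 1 ≠ 0 := by positivity
  simp only [hyp2F1Coeff, poch_succ_left, Nat.factorial_succ, div_mul_div_comm]
  push_cast
  rw [← mul_div_assoc, mul_assoc _ (k ! : ℝ), mul_div_mul_left _ _ hk]
  congr 1 <;> ring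

variable {c} in
lemma hyp2F1Coeff_add_one (hc : ∀ n : ℕ, c ≠ -n) (k : ℕ) :
    hyp2F1Coeff a b (c + 1) k = c / (c + k) * hyp2F1Coeff a b c k := by
  have hc₀ : c ≠ 0 := by simpa using hc 0
  have h_poch : poch (c + 1) k = poch c k * (c + k) / c := by
    rw [eq_div_iff hc₀, ← poch_succ, poch_succ_left, mul_comm]
  rw [hyp2F1Coeff, hyp2F1Coeff, h_poch, div_mul_div_comm, mul_div_assoc', div_div_eq_mul_div]
  congr 1 <;> ring

variable {c} in
lemma hyp2F1Coeff_telescope (hc : ∀ n : ℕ, c ≠ -n) (k : ℕ) :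
    k * hyp2F1Coeff a b c k - (k + 1 : ℕ) * hyp2F1Coeff a b c (k + 1) =
      (c - a - b) * hyp2F1Coeff a b c k
        - (c - a) * (c - b) / c * hyp2F1Coeff a b (c + 1) k := by
  have hc₀ : c ≠ 0 := by simpa using hc 0
  have hck : c + k ≠ 0 := mt eq_neg_of_add_eq_zero_left (hc k)
  rw [hyp2F1Coeff_succ, hyp2F1Coeff_add_one a b hc]
  push_cast
  field_simp
  ring

lemma tendsto_rpow_mul_hyp2F1Coeff_succ :
    Tendsto (fun n : ℕ ↦ (n : ℝ) ^ (c - a - b + 1) * hyp2F1Coeff a b c (n + 1)) atTop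
      (𝓝 (Gamma c / (Gamma a * Gamma b))) := by
  have h := (((tendsto_poch_succ_div_rpow_mul_factorial a).mul
    (tendsto_poch_succ_div_rpow_mul_factorial b)).mul (GammaSeq_tendsto_Gamma c)).mul
      (tendsto_natCast_div_add_atTop (1 : ℝ))
  rw [← mul_inv, mul_one, inv_mul_eq_div] at h
  refine h.congr' ?_
  filter_upwards [eventually_gt_atTop 0] with n hn
  have hn' : (0 : ℝ) < n := by exact_mod_cast hn
  have h_rpow : (n : ℝ) ^ (c - a - b + 1) = n ^ c / (n ^ a * n ^ b) * n := by
    rw [rpow_add_one hn'.ne', rpow_sub hn', rpow_sub hn', div_div]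
  have h_seq : GammaSeq c n = n ^ c * n ! / poch c (n + 1) := rfl
  rw [h_rpow, h_seq, hyp2F1Coeff, Nat.factorial_succ]
  push_cast
  field_simp

end HypergeometricCoefficients

section Convergence

variable (a b c : ℝ)

lemma tendsto_hyp2F1Coeff_ratio :
    Tendsto (fun k : ℕ ↦ (a + k) * (b + k) / ((k + 1) * (c + k))) atTop (𝓝 1) := by
  have h (x y : ℝ) : Tendsto (fun k : ℕ ↦ (x + k) / (y + k)) atTop (𝓝 1) := by
    simpa using tendsto_add_mul_div_add_mul_atTop_nhds x y 1 one_ne_zero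
  simpa [div_mul_div_comm, add_comm] using (h a 1).mul (h b c)

lemma summable_norm_hyp2F1Coeff_mul_pow {z : ℝ} (hz : |z| < 1) :
    Summable fun k ↦ ‖hyp2F1Coeff a b c k * z ^ k‖ := by
  obtain ⟨r, hzr, hr⟩ := exists_between hz
  have h_ratio := ((tendsto_hyp2F1Coeff_ratio a b c).mul_const z).norm
  rw [one_mul] at h_ratio
  refine summable_of_ratio_norm_eventually_le hr ?_
  filter_upwards [h_ratio.eventually_le_const hzr] with k hk
  rw [norm_norm, norm_norm, hyp2F1Coeff_succ, pow_succ', mul_mul_mul_comm, norm_mul]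
  gcongr

variable {a b c}

lemma summable_hyp2F1Coeff (h : 0 < c - a - b) : Summable (hyp2F1Coeff a b c) := by
  refine (summable_nat_add_iff 1).1 <| summable_of_isBigO_nat
    (summable_nat_rpow.2 (show -(c - a - b + 1) < -1 by linarith)) ?_
  have h_bdd := (tendsto_rpow_mul_hyp2F1Coeff_succ a b c).isBigO_one ℝ
  refine (h_bdd.mul (Asymptotics.isBigO_refl (fun n : ℕ ↦ (n : ℝ) ^ (-(c - a - b + 1))) _)).congr'
    ?_ (by simp)
  filter_upwards [eventually_gt_atTop 0] with n hn
  have : (0 : ℝ) < n ^ (c - a - b + 1) := by positivity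
  rw [rpow_neg n.cast_nonneg]
  field_simp

lemma tendsto_mul_hyp2F1Coeff (h : 0 < c - a - b) :
    Tendsto (fun n : ℕ ↦ n * hyp2F1Coeff a b c n) atTop (𝓝 0) := by
  rw [← tendsto_add_atTop_iff_nat 1]
  have h_coeff := (tendsto_add_atTop_iff_nat 1).2 (summable_hyp2F1Coeff h).tendsto_atTop_zero
  have h_rpow := (tendsto_rpow_neg_atTop h).comp tendsto_natCast_atTop_atTop
  have h_prod := (h_rpow.mul (tendsto_rpow_mul_hyp2F1Coeff_succ a b c)).add h_coeff
  rw [zero_mul, zero_add] at h_prod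
  refine h_prod.congr' ?_
  filter_upwards [eventually_gt_atTop 0] with n hn
  have hn' : (0 : ℝ) < n := by exact_mod_cast hn
  have h_cancel : (n : ℝ) ^ (-(c - a - b)) * n ^ (c - a - b + 1) = n := by
    rw [← rpow_add hn', neg_add_cancel_left, rpow_one]
  simp only [Function.comp_apply]
  rw [← mul_assoc, h_cancel, Nat.cast_succ, add_one_mul]

lemma continuousOn_hyp2F1_Icc (h : 0 < c - a - b) :
    ContinuousOn (hyp2F1 a b c) (Set.Icc (-1) 1) := by
  refine continuousOn_tsum (fun k ↦ by fun_prop) (summable_hyp2F1Coeff h).norm fun k x hx ↦ ?_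
  rw [← hyp2F1Coeff, norm_mul, norm_pow]
  exact mul_le_of_le_one_right (norm_nonneg _) (pow_le_one₀ (norm_nonneg _) (abs_le.2 hx))

lemma hasDerivAt_hyp2F1 {z : ℝ} (hz : |z| < 1) :
    HasDerivAt (hyp2F1 a b c) (a * b / c * hyp2F1 (a + 1) (b + 1) (c + 1) z) z := by
  obtain ⟨ρ, hzρ, hρ⟩ := exists_between hz
  have hρ₀ : 0 < ρ := (abs_nonneg z).trans_lt hzρ
  have h_succ (y : ℝ) (k : ℕ) : hyp2F1Coeff a b c (k + 1) * ((k + 1 : ℕ) * y ^ k) =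
      a * b / c * (hyp2F1Coeff (a + 1) (b + 1) (c + 1) k * y ^ k) := by
    rw [← mul_assoc (a * b / c), ← succ_mul_hyp2F1Coeff_succ]
    push_cast
    ring
  have h_bound : Summable fun k : ℕ ↦ ‖hyp2F1Coeff a b c k * (k * ρ ^ (k - 1))‖ := by
    refine (summable_nat_add_iff 1).1 ?_
    simp only [Nat.add_sub_cancel, h_succ, norm_mul (a * b / c)]
    exact (summable_norm_hyp2F1Coeff_mul_pow _ _ _ (by rwa [abs_of_pos hρ₀])).mul_left _
  have h_le (k : ℕ) (y : ℝ) (hy : y ∈ Metric.ball 0 ρ) :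
      ‖hyp2F1Coeff a b c k * (k * y ^ (k - 1))‖ ≤ ‖hyp2F1Coeff a b c k * (k * ρ ^ (k - 1))‖ := by
    simp only [norm_mul, norm_pow, norm_of_nonneg hρ₀.le]
    have := (mem_ball_zero_iff.1 hy).le
    gcongr
  have h_deriv := hasDerivAt_tsum_of_isPreconnected h_bound Metric.isOpen_ball
    (convex_ball 0 ρ).isPreconnected (fun k y _ ↦ (hasDerivAt_pow k y).const_mul _) h_le
    (Metric.mem_ball_self hρ₀)
    (summable_norm_hyp2F1Coeff_mul_pow a b c (z := 0) (by simp)).of_norm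
    (mem_ball_zero_iff.2 hzρ)
  refine h_deriv.congr_deriv ?_
  rw [(h_bound.of_norm_bounded (h_le · z (mem_ball_zero_iff.2 hzρ))).tsum_eq_zero_add,
    hyp2F1_eq_tsum, ← tsum_mul_left]
  simp only [Nat.cast_zero, zero_mul, mul_zero, zero_add, Nat.add_sub_cancel, h_succ]

end Convergence

section GaussSummation

variable {a b c : ℝ}

lemma hyp2F1_one_add_one (hc : ∀ n : ℕ, c ≠ -n) (h : 0 < c - a - b) :
    c * (c - a - b) * hyp2F1 a b c 1 = (c - a) * (c - b) * hyp2F1 a b (c + 1) 1 := by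
  have hc₀ : c ≠ 0 := by simpa using hc 0
  have h_sum := ((summable_hyp2F1Coeff h).hasSum.mul_left (c - a - b)).sub
    ((summable_hyp2F1Coeff (show 0 < c + 1 - a - b by linarith)).hasSum.mul_left
      ((c - a) * (c - b) / c))
  simp_rw [← hyp2F1Coeff_telescope a b hc, ← hyp2F1_one] at h_sum
  have h_lim := h_sum.tendsto_sum_nat
  simp_rw [Finset.sum_range_sub' fun k : ℕ ↦ k * hyp2F1Coeff a b c k] at h_lim
  have h_zero := tendsto_nhds_unique h_lim ((tendsto_mul_hyp2F1Coeff h).const_sub _)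
  simp only [Nat.cast_zero, zero_mul, sub_zero] at h_zero
  field_simp at h_zero
  linear_combination h_zero

lemma poch_mul_hyp2F1_one (hc : ∀ n : ℕ, c ≠ -n) (h : 0 < c - a - b) (n : ℕ) :
    poch c n * poch (c - a - b) n * hyp2F1 a b c 1 =
      poch (c - a) n * poch (c - b) n * hyp2F1 a b (c + n) 1 := by
  induction n with
  | zero => simp
  | succ n ih =>
    have h_step := hyp2F1_one_add_one (a := a) (b := b) (add_natCast_ne_neg_natCast hc n)
      (by linarith [n.cast_nonneg (α := ℝ)])
    simp only [poch_succ]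
    push_cast
    rw [← add_assoc]
    linear_combination (c + n) * (c - a - b + n) * ih + poch (c - a) n * poch (c - b) n * h_step

lemma tendsto_hyp2F1_add_natCast_one (a b c : ℝ) :
    Tendsto (fun n : ℕ ↦ hyp2F1 a b (c + n) 1) atTop (𝓝 1) := by
  have h_atTop : Tendsto (fun n : ℕ ↦ c + n) atTop atTop :=
    tendsto_atTop_add_const_left _ _ tendsto_natCast_atTop_atTop
  have h_lim (k : ℕ) : Tendsto (fun n : ℕ ↦ hyp2F1Coeff a b (c + n) k) atTop
      (𝓝 (if k = 0 then 1 else 0)) := by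
    rcases k with _ | k
    · simp
    · exact tendsto_const_nhds.div_atTop <|
        ((tendsto_poch_succ_atTop k).comp h_atTop).const_mul_atTop (by positivity)
  obtain ⟨d, hd₀, hd⟩ : ∃ d : ℝ, 0 < d ∧ 0 < d - a - b :=
    ⟨|a + b| + 1, by positivity, by linarith [le_abs_self (a + b)]⟩
  simp_rw [hyp2F1_one]
  rw [← tsum_ite_eq (0 : ℕ) fun _ ↦ (1 : ℝ)]
  refine tendsto_tsum_of_dominated_convergence (summable_hyp2F1Coeff hd).norm h_lim ?_
  filter_upwards [h_atTop.eventually_ge_atTop d] with n hn k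
  simp only [hyp2F1Coeff, norm_div, norm_mul (k ! : ℝ), RCLike.norm_natCast,
    norm_of_nonneg (poch_pos hd₀ k).le, norm_of_nonneg (poch_pos (hd₀.trans_le hn) k).le]
  have := poch_pos hd₀ k
  have := poch_le_poch hd₀.le hn k
  gcongr

theorem hyp2F1_one_eq_Gamma (hc : ∀ n : ℕ, c ≠ -n) (h : 0 < c - a - b) :
    hyp2F1 a b c 1 = Gamma c * Gamma (c - a - b) / (Gamma (c - a) * Gamma (c - b)) := by
  have h_poch := tendsto_poch_succ_div_rpow_mul_factorial
  have h_left := ((h_poch c).mul (h_poch (c - a - b))).mul_const (hyp2F1 a b c 1)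
  have h_right := ((h_poch (c - a)).mul (h_poch (c - b))).mul
    ((tendsto_add_atTop_iff_nat 1).2 (tendsto_hyp2F1_add_natCast_one a b c))
  have h_eq := tendsto_nhds_unique_of_eventuallyEq h_left h_right <| by
    filter_upwards [eventually_gt_atTop 0] with n hn
    have hn' : (0 : ℝ) < n := by exact_mod_cast hn
    have h_rpow : (n : ℝ) ^ c * n ^ (c - a - b) = n ^ (c - a) * n ^ (c - b) := by
      rw [← rpow_add hn', ← rpow_add hn']
      ring_nf
    rw [div_mul_div_comm, div_mul_div_comm, mul_mul_mul_comm, mul_mul_mul_comm ((n : ℝ) ^ (c - a)),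
      h_rpow, div_mul_eq_mul_div, div_mul_eq_mul_div, poch_mul_hyp2F1_one hc h]
  have hΓc := Gamma_ne_zero hc
  have hΓ := (Gamma_pos_of_pos h).ne'
  rw [mul_one, ← mul_inv, ← mul_inv, inv_mul_eq_div, div_eq_iff (mul_ne_zero hΓc hΓ)] at h_eq
  rw [h_eq, inv_mul_eq_div]

end GaussSummation

section EulerTransformation

open PowerSeries

/-- The hypergeometric differential operator
`X (1 - X) f'' + (c - (a + b + 1) X) f' - a b f` on formal power series. -/
noncomputable def hypergeometricOp {R : Type*} [CommRing R] (a b c : R) (f : R⟦X⟧) : R⟦X⟧ :=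
  X * (1 - X) * derivative R (derivative R f) + (C c - C (a + b + 1) * X) * derivative R f
    - C (a * b) * f

lemma coeff_X_mul_derivative {R : Type*} [CommRing R] (f : R⟦X⟧) (n : ℕ) :
    coeff n (X * derivative R f) = n * coeff n f := by
  rcases n with _ | n
  · simp
  · rw [coeff_succ_X_mul, coeff_derivative, Nat.cast_succ, mul_comm]

lemma coeff_hypergeometricOp {R : Type*} [CommRing R] (a b c : R) (f : R⟦X⟧) (n : ℕ) :
    coeff n (hypergeometricOp a b c f) =
      (n + 1) * (c + n) * coeff (n + 1) f - (a + n) * (b + n) * coeff n f := by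
  have h_euler : hypergeometricOp a b c f =
      X * derivative R (derivative R f) + C c * derivative R f
        - (X * derivative R (X * derivative R f) + C (a + b) * (X * derivative R f)
          + C (a * b) * f) := by
    simp only [hypergeometricOp, Derivation.leibniz, derivative_X, smul_eq_mul, map_add, map_one]
    ring
  rw [h_euler]
  simp only [map_sub (coeff n), map_add (coeff n), coeff_C_mul, coeff_X_mul_derivative,
    coeff_derivative]
  ring

lemma hypergeometricOp_mul {R : Type*} [CommRing R] (a b c : R) {B : R⟦X⟧}
    (hB : (1 - X) * derivative R B = C (a + b - c) * B) (f : R⟦X⟧) :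
    hypergeometricOp a b c (B * f) = B * hypergeometricOp (c - a) (c - b) c f := by
  have hB' : (1 - X) * derivative R (derivative R B) =
      (C (a + b - c) + 1) * derivative R B := by
    have h := congrArg (derivative R) hB
    simp only [Derivation.leibniz, map_sub, derivative_X, derivative_C, smul_eq_mul,
      derivative_one] at h
    simp only [map_sub]
    linear_combination h
  simp only [hypergeometricOp, Derivation.leibniz, smul_eq_mul, map_add, map_sub, map_mul, map_one]
    at hB hB' ⊢
  linear_combination X * f * hB' + (2 * X * derivative R f + C c * f) * hB

lemma coeff_eq_of_hypergeometricOp_eq_zero {a b c : ℝ} (hc : ∀ n : ℕ, c ≠ -n) {f : ℝ⟦X⟧}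
    (hf : hypergeometricOp a b c f = 0) (n : ℕ) :
    coeff n f = hyp2F1Coeff a b c n * constantCoeff f := by
  induction n with
  | zero => simp
  | succ n ih =>
    have h_rec := congrArg (coeff n) hf
    have hcn : c + n ≠ 0 := mt eq_neg_of_add_eq_zero_left (hc n)
    rw [coeff_hypergeometricOp, ih, map_zero] at h_rec
    rw [hyp2F1Coeff_succ]
    field_simp
    linear_combination h_rec

lemma hypergeometricOp_mk_hyp2F1Coeff (a b : ℝ) {c : ℝ} (hc : ∀ n : ℕ, c ≠ -n) :
    hypergeometricOp a b c (mk (hyp2F1Coeff a b c)) = 0 := by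
  ext n
  have hcn : c + n ≠ 0 := mt eq_neg_of_add_eq_zero_left (hc n)
  rw [coeff_hypergeometricOp, coeff_mk, coeff_mk, hyp2F1Coeff_succ, map_zero]
  field_simp
  ring

lemma one_sub_X_mul_derivative_mk_poch_div_factorial (m : ℝ) :
    (1 - X) * derivative ℝ (mk fun k ↦ poch m k / (k ! : ℝ)) =
      C m * mk fun k ↦ poch m k / (k ! : ℝ) := by
  ext n
  rw [sub_mul, one_mul, map_sub, coeff_X_mul_derivative, coeff_derivative, coeff_C_mul]
  simp only [coeff_mk, poch_succ, Nat.factorial_succ]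
  push_cast
  field_simp
  ring

lemma sum_antidiagonal_poch_div_factorial_mul_hyp2F1Coeff (a b : ℝ) {c : ℝ}
    (hc : ∀ n : ℕ, c ≠ -n) (n : ℕ) :
    ∑ p ∈ Finset.HasAntidiagonal.antidiagonal n,
      poch (a + b - c) p.1 / (p.1 ! : ℝ) * hyp2F1Coeff (c - a) (c - b) c p.2 =
        hyp2F1Coeff a b c n := by
  set B : ℝ⟦X⟧ := mk fun k ↦ poch (a + b - c) k / (k ! : ℝ) with hB
  have h_ode : hypergeometricOp a b c (B * mk (hyp2F1Coeff (c - a) (c - b) c)) = 0 := by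
    rw [hypergeometricOp_mul a b c (one_sub_X_mul_derivative_mk_poch_div_factorial _),
      hypergeometricOp_mk_hyp2F1Coeff _ _ hc, mul_zero]
  simpa [hB, coeff_mul, ← coeff_zero_eq_constantCoeff_apply] using
    coeff_eq_of_hypergeometricOp_eq_zero hc h_ode n

lemma hasSum_poch_div_factorial_mul_pow (m : ℝ) {z : ℝ} (hz : |z| < 1) :
    HasSum (fun k ↦ poch m k / (k ! : ℝ) * z ^ k) ((1 - z) ^ (-m)) := by
  have h := (one_div_one_sub_rpow_hasFPowerSeriesOnBall_zero m).hasSum (y := z)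
    (by simpa [enorm_eq_nnnorm, ← NNReal.coe_lt_coe] using hz)
  rw [zero_add, one_div, ← rpow_neg (by linarith [(abs_lt.1 hz).2])] at h
  refine h.congr_fun fun k ↦ ?_
  have h_choose : (k ! : ℝ) * Ring.choose (m + k - 1) k = poch m k := by
    rw [poch_eq_ascPochhammer_eval, ← Polynomial.ascPochhammer_smeval_eq_eval,
      ← Ring.factorial_nsmul_multichoose_eq_ascPochhammer, nsmul_eq_mul, Ring.choose]
    ring_nf
  rw [FormalMultilinearSeries.ofScalars_apply_eq, smul_eq_mul, ← h_choose,
    mul_div_cancel_left₀ _ (by positivity)]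

theorem hyp2F1_eq_one_sub_rpow_mul_hyp2F1 (a b : ℝ) {c z : ℝ} (hc : ∀ n : ℕ, c ≠ -n)
    (hz : |z| < 1) :
    hyp2F1 a b c z = (1 - z) ^ (c - a - b) * hyp2F1 (c - a) (c - b) c z := by
  have h_binom := hasSum_poch_div_factorial_mul_pow (a + b - c) hz
  rw [show c - a - b = -(a + b - c) by ring, ← h_binom.tsum_eq, hyp2F1_eq_tsum (c - a),
    tsum_mul_tsum_eq_tsum_sum_antidiagonal_of_summable_norm h_binom.summable.norm
      (summable_norm_hyp2F1Coeff_mul_pow _ _ _ hz)]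
  refine tsum_congr fun n ↦ ?_
  rw [← hyp2F1Coeff, ← sum_antidiagonal_poch_div_factorial_mul_hyp2F1Coeff a b hc, Finset.sum_mul]
  refine Finset.sum_congr rfl fun p hp ↦ ?_
  rw [← Finset.HasAntidiagonal.mem_antidiagonal.1 hp, pow_add]
  ring

end EulerTransformation

section OddsRatio

/-- The argument `z(s,r) = s(1-r) / (r(1-s))` of the hypergeometric function in `twoPt`: the ratio
of the odds `s/(1-s)` and `r/(1-r)`. -/
noncomputable def oddsRatio (s r : ℝ) : ℝ := s * (1 - r) / (r * (1 - s))

variable {s r : ℝ}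

lemma oddsRatio_self (hs : s ∈ Set.Ioo 0 1) : oddsRatio s s = 1 :=
  div_self (mul_pos hs.1 (sub_pos.2 hs.2)).ne'

lemma one_sub_oddsRatio (hr : r ≠ 0) (hs : s ≠ 1) :
    1 - oddsRatio s r = (r - s) / (r * (1 - s)) := by
  have := sub_ne_zero.2 hs.symm
  rw [oddsRatio]
  field_simp
  ring

lemma oddsRatio_mem_Ioo (hs : s ∈ Set.Ioo 0 1) (hr : r ∈ Set.Ioo s 1) :
    oddsRatio s r ∈ Set.Ioo 0 1 := by
  have hr₀ : 0 < r := hs.1.trans hr.1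
  have h_den := mul_pos hr₀ (sub_pos.2 hs.2)
  refine ⟨div_pos (mul_pos hs.1 (sub_pos.2 hr.2)) h_den, sub_pos.1 ?_⟩
  rw [one_sub_oddsRatio hr₀.ne' hs.2.ne]
  exact div_pos (sub_pos.2 hr.1) h_den

lemma hasDerivAt_oddsRatio (hr : r ≠ 0) (hs : s ≠ 1) :
    HasDerivAt (oddsRatio s) (-s / ((1 - s) * r ^ 2)) r := by
  have hs' := sub_ne_zero.2 hs.symm
  refine ((((hasDerivAt_id' r).const_sub 1).const_mul s).fun_div
    ((hasDerivAt_id' r).mul_const (1 - s)) (mul_ne_zero hr hs')).congr_deriv ?_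
  field_simp
  ring

end OddsRatio

section TwoPointKernel

variable {δ s r : ℝ}

lemma twoPt_of_lt (hδ : 0 < δ) (hs : s ∈ Set.Ioo 0 1) (hr : r ∈ Set.Ioo s 1) :
    twoPt δ s r = Kcoef δ * (√(s * (1 - s) * (r * (1 - r))) *
      hyp2F1 (-1 / 2) (-1 / 2) (δ / 2) (oddsRatio s r)) := by
  obtain ⟨hz₀, hz₁⟩ := oddsRatio_mem_Ioo hs hr
  have hr₀ : 0 < r := hs.1.trans hr.1
  have h_sub : 0 < r - s := sub_pos.2 hr.1
  have h_left : 0 < s * (1 - r) := mul_pos hs.1 (sub_pos.2 hr.2)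
  have h_right : 0 < r * (1 - s) := mul_pos hr₀ (sub_pos.2 hs.2)
  have h_euler := hyp2F1_eq_one_sub_rpow_mul_hyp2F1 ((δ + 1) / 2) ((δ + 1) / 2)
    (ne_neg_natCast_of_pos (half_pos hδ)) (abs_lt.2 ⟨by linarith, hz₁⟩)
  have h_sqrt : √(s * (1 - s) * (r * (1 - r))) =
      (s * (1 - r)) ^ (1 / 2 : ℝ) * (r * (1 - s)) ^ (1 / 2 : ℝ) := by
    rw [← mul_rpow h_left.le h_right.le, ← sqrt_eq_rpow]
    ring_nf
  have h_one_sub : (1 - oddsRatio s r) ^ (-(δ / 2 + 1)) =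
      (r * (1 - s)) ^ (δ / 2 + 1) / (r - s) ^ (δ / 2 + 1) := by
    rw [one_sub_oddsRatio hr₀.ne' hs.2.ne, rpow_neg (by positivity),
      div_rpow h_sub.le h_right.le, inv_div]
  have h_half : (r * (1 - s)) ^ (1 / 2 : ℝ) =
      (r * (1 - s)) ^ (-((δ + 1) / 2)) * (r * (1 - s)) ^ (δ / 2 + 1) := by
    rw [← rpow_add h_right]
    ring_nf
  rw [show δ / 2 - (δ + 1) / 2 - (δ + 1) / 2 = -(δ / 2 + 1) by ring,
    show δ / 2 - (δ + 1) / 2 = -1 / 2 by ring, h_one_sub] at h_euler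
  rw [twoPt, if_pos hr.1, ← oddsRatio, h_euler, h_sqrt, h_half]
  field_simp

/-- The derivative of `r ↦ twoPt δ s r` on `(s, 1)`, in the form given by the Euler transformation;
unlike the derivative itself, this expression is also meaningful at `r = s`. -/
noncomputable def twoPtDeriv (δ s r : ℝ) : ℝ :=
  Kcoef δ * (s * (1 - s) * (1 - 2 * r) / (2 * √(s * (1 - s) * (r * (1 - r)))) *
      hyp2F1 (-1 / 2) (-1 / 2) (δ / 2) (oddsRatio s r) +
    √(s * (1 - s) * (r * (1 - r))) *
      (1 / (2 * δ) * hyp2F1 (1 / 2) (1 / 2) (δ / 2 + 1) (oddsRatio s r) *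
        (-s / ((1 - s) * r ^ 2))))

lemma hasDerivAt_twoPt (hδ : 0 < δ) (hs : s ∈ Set.Ioo 0 1) (hr : r ∈ Set.Ioo s 1) :
    HasDerivAt (twoPt δ s) (twoPtDeriv δ s r) r := by
  obtain ⟨hz₀, hz₁⟩ := oddsRatio_mem_Ioo hs hr
  have hr₀ : 0 < r := hs.1.trans hr.1
  have h_prod : 0 < s * (1 - s) * (r * (1 - r)) :=
    mul_pos (mul_pos hs.1 (sub_pos.2 hs.2)) (mul_pos hr₀ (sub_pos.2 hr.2))
  have h_sqrt : HasDerivAt (fun r ↦ √(s * (1 - s) * (r * (1 - r))))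
      (s * (1 - s) * (1 - 2 * r) / (2 * √(s * (1 - s) * (r * (1 - r))))) r := by
    refine HasDerivAt.sqrt ?_ h_prod.ne'
    refine (((hasDerivAt_id' r).fun_mul ((hasDerivAt_id' r).const_sub 1)).const_mul
      (s * (1 - s))).congr_deriv ?_
    ring
  have h_hyp : HasDerivAt (hyp2F1 (-1 / 2) (-1 / 2) (δ / 2))
      (1 / (2 * δ) * hyp2F1 (1 / 2) (1 / 2) (δ / 2 + 1) (oddsRatio s r)) (oddsRatio s r) := by
    refine (hasDerivAt_hyp2F1 (abs_lt.2 ⟨by linarith, hz₁⟩)).congr_deriv ?_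
    rw [show (-1 / 2 + 1 : ℝ) = 1 / 2 by norm_num]
    field_simp
  refine ((h_sqrt.fun_mul (h_hyp.comp r (hasDerivAt_oddsRatio hr₀.ne' hs.2.ne))).const_mul
    (Kcoef δ)).congr_of_eventuallyEq ?_
  filter_upwards [isOpen_Ioo.mem_nhds hr] with x hx using twoPt_of_lt hδ hs hx

lemma continuousWithinAt_twoPtDeriv_self (hδ : 0 < δ) (hs : s ∈ Set.Ioo 0 1) :
    ContinuousWithinAt (twoPtDeriv δ s) (Set.Ioo s 1) s := by
  have hs₁ : 0 < 1 - s := sub_pos.2 hs.2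
  have hs₀ : 0 < s := hs.1
  have h_hyp {a b c : ℝ} (h : 0 < c - a - b) :
      ContinuousWithinAt (fun r ↦ hyp2F1 a b c (oddsRatio s r)) (Set.Ioo s 1) s := by
    refine ContinuousWithinAt.comp (g := hyp2F1 a b c) (t := Set.Icc (-1) 1) ?_
      (hasDerivAt_oddsRatio hs₀.ne' hs.2.ne).continuousAt.continuousWithinAt fun r hr ↦ ?_
    · rw [oddsRatio_self hs]
      exact continuousOn_hyp2F1_Icc h 1 (by norm_num)
    · obtain ⟨hz₀, hz₁⟩ := oddsRatio_mem_Ioo hs hr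
      exact ⟨by linarith, hz₁.le⟩
  have h_sqrt : ContinuousWithinAt (fun r ↦ √(s * (1 - s) * (r * (1 - r)))) (Set.Ioo s 1) s := by
    fun_prop
  have h_quot : ContinuousWithinAt (fun r ↦ -s / ((1 - s) * r ^ 2)) (Set.Ioo s 1) s := by
    fun_prop (disch := positivity)
  have h_num : ContinuousWithinAt (fun r ↦ s * (1 - s) * (1 - 2 * r)) (Set.Ioo s 1) s := by
    fun_prop
  have h_sqrt_ne : 2 * √(s * (1 - s) * (s * (1 - s))) ≠ 0 := by positivity
  exact continuousWithinAt_const.mul <|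
    ((h_num.div (continuousWithinAt_const.mul h_sqrt) h_sqrt_ne).mul (h_hyp (by linarith))).add
      (h_sqrt.mul ((continuousWithinAt_const.mul (h_hyp (by linarith))).mul h_quot))

lemma Kcoef_mul_Gamma_mul_Gamma_div (hδ : 0 < δ) :
    Kcoef δ * (Gamma (δ / 2) * Gamma (δ / 2 + 1) /
      (Gamma ((δ + 1) / 2) * Gamma ((δ + 1) / 2))) = δ := by
  have := (Gamma_pos_of_pos (half_pos hδ)).ne'
  have := (Gamma_pos_of_pos (show 0 < (δ + 1) / 2 by positivity)).ne'
  rw [Kcoef, Gamma_add_one (half_pos hδ).ne']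
  field_simp

lemma Kcoef_mul_hyp2F1_neg_half_one (hδ : 0 < δ) :
    Kcoef δ * hyp2F1 (-1 / 2) (-1 / 2) (δ / 2) 1 = δ := by
  rw [hyp2F1_one_eq_Gamma (ne_neg_natCast_of_pos (half_pos hδ)) (by linarith),
    show δ / 2 - -1 / 2 - -1 / 2 = δ / 2 + 1 by ring,
    show δ / 2 - -1 / 2 = (δ + 1) / 2 by ring, Kcoef_mul_Gamma_mul_Gamma_div hδ]

lemma Kcoef_mul_hyp2F1_half_one (hδ : 0 < δ) :
    Kcoef δ * hyp2F1 (1 / 2) (1 / 2) (δ / 2 + 1) 1 = δ := by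
  rw [hyp2F1_one_eq_Gamma (ne_neg_natCast_of_pos (by positivity)) (by linarith),
    show δ / 2 + 1 - 1 / 2 - 1 / 2 = δ / 2 by ring,
    show δ / 2 + 1 - 1 / 2 = (δ + 1) / 2 by ring, mul_comm (Gamma (δ / 2 + 1)),
    Kcoef_mul_Gamma_mul_Gamma_div hδ]

lemma twoPtDeriv_self (hδ : 0 < δ) (hs : s ∈ Set.Ioo 0 1) :
    twoPtDeriv δ s s = -δ * s + (δ - 1) / 2 := by
  have hs₀ : s ≠ 0 := hs.1.ne'
  have hs₁ : 1 - s ≠ 0 := (sub_pos.2 hs.2).ne'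
  rw [twoPtDeriv, oddsRatio_self hs, sqrt_mul_self (mul_pos hs.1 (sub_pos.2 hs.2)).le]
  calc _ = (1 - 2 * s) / 2 * (Kcoef δ * hyp2F1 (-1 / 2) (-1 / 2) (δ / 2) 1) -
        1 / (2 * δ) * (Kcoef δ * hyp2F1 (1 / 2) (1 / 2) (δ / 2 + 1) 1) := by
        field_simp
        ring
    _ = -δ * s + (δ - 1) / 2 := by
        rw [Kcoef_mul_hyp2F1_neg_half_one hδ, Kcoef_mul_hyp2F1_half_one hδ]
        field_simp
        ring

end TwoPointKernel

theorem twoPt_deriv_right_limit (δ : ℝ) (hδ : 0 < δ) (s : ℝ) (hs : s ∈ Set.Ioo (0 : ℝ) 1) :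
    Tendsto (fun r => deriv (fun r => twoPt δ s r) r)
      (nhdsWithin s (Set.Ioo s 1)) (nhds (-δ * s + (δ - 1) / 2)) := by
  rw [← twoPtDeriv_self hδ hs]
  refine (continuousWithinAt_twoPtDeriv_self hδ hs).congr' ?_
  filter_upwards [self_mem_nhdsWithin] with r hr using (hasDerivAt_twoPt hδ hs hr).deriv.symm
end

section
/- Let δ>0 and s ∈ (0,1). The right limit lim_{r↓s} d/dr G_δ(s,r) (taken over r ∈ (s,1)) and the left limit lim_{r↑s} d/dr G_δ(s,r) (taken over r ∈ (0,s)) both exist, and their difference equals −1: lim_{r↓s} d/dr G_δ(s,r) − lim_{r↑s} d/dr G_δ(s,r) = −1. -/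
open MeasureTheory Real Filter

/-!
Euler's transformation replaces `₂F₁((δ+1)/2, (δ+1)/2, δ/2, z)` by a power of `1 - z`, which cancels
the factor `(r - s)^(δ/2+1)`, times `P(z) = ₂F₁(-1/2, -1/2, δ/2, z)`. Hence, for `s < r`,
`G_δ(s,r) = K(δ) √(s(1-s)) √(r(1-r)) P(z(s,r))`, and `P` extends continuously to `z = 1`. Its
derivative is a multiple of `₂F₁(1/2, 1/2, δ/2+1, z)`, so by Abel's theorem and Gauss's summation
formula `P'(z) → 1/(2K(δ))` as `z → 1`. As `∂z/∂r = -z/(r(1-r))`, the term of `∂G/∂r` containing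
`P'` tends to `-1/2` as `r ↓ s`. The reflection `(s,r) ↦ (1-s,1-r)` preserves the kernel and turns
the left limit into minus the right limit at `1-s`: the term containing `P(1)` is unchanged, while
`-1/2` becomes `+1/2`.
-/

section FormalEuler

open PowerSeries

variable {K : Type*} [Field K] {a b c : K} {F : K⟦X⟧}

/-- The Gauss hypergeometric series as a formal power series. -/
noncomputable def hypergeometricPowerSeries (a b c : K) : K⟦X⟧ :=
  PowerSeries.mk (ordinaryHypergeometricCoefficient a b c)

/-- The formal power series `F` solves the hypergeometric differential equation
`X(1-X)F'' + (c - (a+b+1)X)F' = abF`. -/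
def SatisfiesHypergeometricEquation (a b c : K) (F : K⟦X⟧) : Prop :=
  X * (1 - X) * d⁄dX K (d⁄dX K F) + (C c - C (a + b + 1) * X) * d⁄dX K F = C (a * b) * F

theorem satisfiesHypergeometricEquation_iff_coeff :
    SatisfiesHypergeometricEquation a b c F ↔
      ∀ n : ℕ, coeff (n + 1) F * ((n + 1) * (c + n)) = coeff n F * ((a + n) * (b + n)) := by
  rw [SatisfiesHypergeometricEquation, PowerSeries.ext_iff]
  refine forall_congr' fun n ↦ ?_
  have expand : X * (1 - X) * d⁄dX K (d⁄dX K F) + (C c - C (a + b + 1) * X) * d⁄dX K F =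
      X * d⁄dX K (d⁄dX K F) - X * (X * d⁄dX K (d⁄dX K F)) + C c * d⁄dX K F
        - C (a + b + 1) * (X * d⁄dX K F) := by ring
  rw [expand, ← sub_eq_zero, ← sub_eq_zero (b := coeff n F * _)]
  refine Eq.congr_left ?_
  simp only [(coeff n).map_add, map_sub, coeff_C_mul]
  rcases n with _ | _ | n <;>
    simp only [coeff_succ_X_mul, coeff_zero_X_mul, coeff_derivative] <;> push_cast <;> ring

theorem ordinaryHypergeometricCoefficient_zero : ordinaryHypergeometricCoefficient a b c 0 = 1 := by
  simp [ordinaryHypergeometricCoefficient]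

theorem constantCoeff_hypergeometricPowerSeries :
    constantCoeff (hypergeometricPowerSeries a b c) = 1 := by
  rw [← coeff_zero_eq_constantCoeff_apply, hypergeometricPowerSeries, coeff_mk,
    ordinaryHypergeometricCoefficient_zero]

theorem SatisfiesHypergeometricEquation.mul_of_one_sub_X_mul_derivative_eq {B : K⟦X⟧}
    (hF : SatisfiesHypergeometricEquation (c - a) (c - b) c F)
    (hB : (1 - X) * d⁄dX K B = C (a + b - c) * B) :
    SatisfiesHypergeometricEquation a b c (B * F) := by
  have hX : (1 - X : K⟦X⟧) ≠ 0 := fun h ↦ by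
    simpa using congrArg constantCoeff h
  have hB' : (1 - X) * d⁄dX K (d⁄dX K B) = C (a + b - c + 1) * d⁄dX K B := by
    have := congrArg (d⁄dX K) hB
    simp only [Derivation.leibniz, smul_eq_mul, map_sub, Derivation.map_one_eq_zero,
      derivative_X, derivative_C] at this
    simp only [map_add, map_sub, map_one] at this ⊢
    linear_combination this
  apply mul_left_cancel₀ hX
  unfold SatisfiesHypergeometricEquation at hF
  simp only [Derivation.leibniz, smul_eq_mul, map_add, map_sub, map_mul, map_one] at hF hB hB' ⊢
  linear_combination X * (1 - X) * F * hB' + (1 - X) * B * hF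
    + (2 * X * (1 - X) * d⁄dX K F + (C c - (C a + C b + 1) * X) * F
      + X * F * (C a + C b - C c + 1)) * hB

variable [CharZero K]

theorem ordinaryHypergeometricCoefficient_succ_mul {n : ℕ} (hc : c + n ≠ 0) :
    ordinaryHypergeometricCoefficient a b c (n + 1) * ((n + 1) * (c + n)) =
      ordinaryHypergeometricCoefficient a b c n * ((a + n) * (b + n)) := by
  have hn : (n + 1 : K) ≠ 0 := n.cast_add_one_ne_zero
  simp only [ordinaryHypergeometricCoefficient, ascPochhammer_succ_eval, Nat.factorial_succ,
    Nat.cast_mul, Nat.cast_succ, mul_inv]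
  field_simp

theorem satisfiesHypergeometricEquation_hypergeometricPowerSeries (hc : ∀ n : ℕ, c + n ≠ 0) :
    SatisfiesHypergeometricEquation a b c (hypergeometricPowerSeries a b c) :=
  satisfiesHypergeometricEquation_iff_coeff.2 fun n ↦ by
    simpa only [hypergeometricPowerSeries, coeff_mk] using
      ordinaryHypergeometricCoefficient_succ_mul (hc n)

theorem SatisfiesHypergeometricEquation.eq_hypergeometricPowerSeries
    (hF : SatisfiesHypergeometricEquation a b c F) (hc : ∀ n : ℕ, c + n ≠ 0)
    (h0 : constantCoeff F = 1) : F = hypergeometricPowerSeries a b c := by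
  ext n
  rw [hypergeometricPowerSeries, coeff_mk]
  induction n with
  | zero => rw [coeff_zero_eq_constantCoeff_apply, h0, ordinaryHypergeometricCoefficient_zero]
  | succ n ih =>
    have hn : ((n : K) + 1) * (c + n) ≠ 0 := mul_ne_zero n.cast_add_one_ne_zero (hc n)
    apply mul_right_cancel₀ hn
    rw [satisfiesHypergeometricEquation_iff_coeff.1 hF n,
      ordinaryHypergeometricCoefficient_succ_mul (hc n), ih]

theorem one_sub_X_mul_derivative_hypergeometricPowerSeries_one_one :
    (1 - X) * d⁄dX K (hypergeometricPowerSeries a 1 1) =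
      C a * hypergeometricPowerSeries a 1 1 := by
  ext n
  have hn : (1 + n : K) ≠ 0 := by rw [add_comm]; exact n.cast_add_one_ne_zero
  have hrec : ordinaryHypergeometricCoefficient a 1 1 (n + 1) * (n + 1) =
      ordinaryHypergeometricCoefficient a 1 1 n * (a + n) := by
    apply mul_right_cancel₀ hn
    linear_combination ordinaryHypergeometricCoefficient_succ_mul (a := a) (b := 1) hn
  rw [sub_mul, one_mul, map_sub, coeff_C_mul, coeff_derivative]
  simp only [hypergeometricPowerSeries, coeff_mk]
  rcases n with _ | n
  · rw [coeff_zero_X_mul]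
    linear_combination hrec
  · rw [coeff_succ_X_mul, coeff_derivative, coeff_mk]
    push_cast at hrec ⊢
    linear_combination hrec

theorem hypergeometricPowerSeries_euler_transformation (hc : ∀ n : ℕ, c + n ≠ 0) :
    hypergeometricPowerSeries a b c =
      hypergeometricPowerSeries (a + b - c) 1 1 * hypergeometricPowerSeries (c - a) (c - b) c := by
  have hmul := (satisfiesHypergeometricEquation_hypergeometricPowerSeries hc
    ).mul_of_one_sub_X_mul_derivative_eq
      (one_sub_X_mul_derivative_hypergeometricPowerSeries_one_one (a := a + b - c))
  refine (hmul.eq_hypergeometricPowerSeries hc ?_).symm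
  rw [map_mul, constantCoeff_hypergeometricPowerSeries, constantCoeff_hypergeometricPowerSeries,
    mul_one]

end FormalEuler

section Hypergeometric

theorem one_le_ordinaryHypergeometricSeries_radius {𝕂 : Type*} (𝔸 : Type*) [RCLike 𝕂]
    [NormedDivisionRing 𝔸] [NormedAlgebra 𝕂 𝔸] (a b c : 𝕂) :
    1 ≤ (ordinaryHypergeometricSeries 𝔸 a b c).radius := by
  by_cases! h : ∃ k : ℕ, a = -k ∨ b = -k ∨ c = -k
  · suffices (ordinaryHypergeometricSeries 𝔸 a b c).radius = ⊤ from this ▸ le_top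
    obtain ⟨k, rfl | rfl | rfl⟩ := h
    · exact ordinaryHypergeometric_radius_top_of_neg_nat₁ 𝔸 b c
    · exact ordinaryHypergeometric_radius_top_of_neg_nat₂ 𝔸 a c
    · exact ordinaryHypergeometric_radius_top_of_neg_nat₃ 𝔸 a b
  · have eq_neg_swap {k x : 𝕂} (hk : k = -x) : x = -k := neg_eq_iff_eq_neg.1 hk.symm
    exact (ordinaryHypergeometricSeries_radius_eq_one 𝔸 a b c fun k ↦
      ⟨(h k).1 ∘ eq_neg_swap, (h k).2.1 ∘ eq_neg_swap, (h k).2.2 ∘ eq_neg_swap⟩).ge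

variable {𝕂 : Type*} [RCLike 𝕂] {a b c z : 𝕂}

theorem mem_eball_ordinaryHypergeometricSeries_radius (hz : ‖z‖ < 1) :
    z ∈ Metric.eball (0 : 𝕂) (ordinaryHypergeometricSeries 𝕂 a b c).radius := by
  refine Metric.eball_subset_eball (one_le_ordinaryHypergeometricSeries_radius 𝕂 a b c) ?_
  simpa [← ofReal_norm] using hz

theorem summable_norm_ordinaryHypergeometricCoefficient_mul_pow (hz : ‖z‖ < 1) :
    Summable fun n ↦ ‖ordinaryHypergeometricCoefficient a b c n * z ^ n‖ := by
  simpa only [ordinaryHypergeometricSeries_apply_eq, smul_eq_mul] using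
    (ordinaryHypergeometricSeries 𝕂 a b c).summable_norm_apply
      (mem_eball_ordinaryHypergeometricSeries_radius hz)

theorem hasSum_ordinaryHypergeometric (hz : ‖z‖ < 1) :
    HasSum (fun n ↦ ordinaryHypergeometricCoefficient a b c n * z ^ n) (₂F₁ a b c z) := by
  have h := (ordinaryHypergeometricSeries 𝕂 a b c).hasSum
    (mem_eball_ordinaryHypergeometricSeries_radius hz)
  simp only [ordinaryHypergeometricSeries_apply_eq, smul_eq_mul] at h
  exact h

theorem succ_mul_ordinaryHypergeometricCoefficient_succ {K : Type*} [Field K] [CharZero K]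
    (a b c : K) (n : ℕ) :
    (n + 1) * ordinaryHypergeometricCoefficient a b c (n + 1) =
      a * b / c * ordinaryHypergeometricCoefficient (a + 1) (b + 1) (c + 1) n := by
  have hn : (n + 1 : K) ≠ 0 := n.cast_add_one_ne_zero
  simp only [ordinaryHypergeometricCoefficient, ascPochhammer_succ_left, Polynomial.eval_mul,
    Polynomial.eval_comp, Polynomial.eval_add, Polynomial.eval_X, Polynomial.eval_one,
    Nat.factorial_succ, Nat.cast_mul, Nat.cast_succ, mul_inv]
  field_simp

theorem hasDerivAt_ordinaryHypergeometric (hz : ‖z‖ < 1) :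
    HasDerivAt (₂F₁ a b c) (a * b / c * ₂F₁ (a + 1) (b + 1) (c + 1) z) z := by
  set p := ordinaryHypergeometricSeries 𝕂 a b c
  have hmem : z ∈ Metric.eball (0 : 𝕂) p.radius := mem_eball_ordinaryHypergeometricSeries_radius hz
  have hderiv : HasDerivAt (₂F₁ a b c) (p.derivSeries.sum z 1) z :=
    (p.hasFDerivAt_sum (by simpa using hmem)).hasDerivAt
  have hsum : HasSum (fun n ↦ p.derivSeries n (fun _ ↦ z) 1) (p.derivSeries.sum z 1) :=
    (p.derivSeries.hasSum (Metric.eball_subset_eball p.radius_le_radius_derivSeries hmem)).mapL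
      (ContinuousLinearMap.apply 𝕂 𝕂 1)
  have hterm (n : ℕ) : p.derivSeries n (fun _ ↦ z) 1 =
      a * b / c * (ordinaryHypergeometricCoefficient (a + 1) (b + 1) (c + 1) n * z ^ n) := by
    rw [FormalMultilinearSeries.apply_eq_pow_smul_coeff, smul_apply,
      FormalMultilinearSeries.derivSeries_coeff_one, ← mul_assoc,
      ← succ_mul_ordinaryHypergeometricCoefficient_succ]
    simp only [p, ordinaryHypergeometricSeries, FormalMultilinearSeries.coeff_ofScalars,
      smul_eq_mul, nsmul_eq_mul]
    push_cast
    ring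
  simp only [hterm] at hsum
  rwa [((hasSum_ordinaryHypergeometric hz).mul_left _).unique hsum]

end Hypergeometric

section EulerTransformation

variable {a b c z : ℝ}

theorem ordinaryHypergeometric_one_one_eq_rpow (hz : |z| < 1) :
    ₂F₁ a 1 1 z = (1 - z) ^ (-a) := by
  have hk (k : ℕ) : (k : ℝ) ≠ -1 := by linarith [k.cast_nonneg (α := ℝ)]
  have h := (Real.one_add_rpow_hasFPowerSeriesOnBall_zero (a := -a)).hasSum (y := -z)
    (by simpa [← ofReal_norm] using hz)
  rw [zero_add, ← sub_eq_add_neg,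
    binomialSeries_eq_ordinaryHypergeometricSeries fun k ↦ hk k, neg_neg] at h
  have hterm (n : ℕ) : ((ordinaryHypergeometricSeries ℝ a 1 1).compContinuousLinearMap
      (-ContinuousLinearMap.id ℝ ℝ) n fun _ ↦ -z) =
      ordinaryHypergeometricCoefficient a 1 1 n * z ^ n := by
    rw [FormalMultilinearSeries.compContinuousLinearMap_apply, Function.comp_def]
    simp only [neg_apply, ContinuousLinearMap.id_apply, neg_neg,
      ordinaryHypergeometricSeries_apply_eq, smul_eq_mul]
  simp only [hterm] at h
  exact (hasSum_ordinaryHypergeometric hz).unique h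

theorem ordinaryHypergeometric_euler_transformation (hc : ∀ n : ℕ, c + n ≠ 0) (hz : |z| < 1) :
    ₂F₁ a b c z = (1 - z) ^ (c - a - b) * ₂F₁ (c - a) (c - b) c z := by
  have hpow : (1 - z) ^ (c - a - b) = ₂F₁ (a + b - c) 1 1 z := by
    rw [ordinaryHypergeometric_one_one_eq_rpow hz]
    congr 1
    ring
  have hprod := tsum_mul_tsum_eq_tsum_sum_antidiagonal_of_summable_norm
    (summable_norm_ordinaryHypergeometricCoefficient_mul_pow (a := a + b - c) (b := 1) (c := 1) hz)
    (summable_norm_ordinaryHypergeometricCoefficient_mul_pow (a := c - a) (b := c - b) (c := c) hz)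
  rw [(hasSum_ordinaryHypergeometric hz).tsum_eq, (hasSum_ordinaryHypergeometric hz).tsum_eq]
    at hprod
  rw [hpow, hprod, ← (hasSum_ordinaryHypergeometric hz).tsum_eq]
  refine tsum_congr fun n ↦ ?_
  have hcoeff := congrArg (PowerSeries.coeff n)
    (hypergeometricPowerSeries_euler_transformation hc (a := a) (b := b))
  simp only [PowerSeries.coeff_mul, hypergeometricPowerSeries, PowerSeries.coeff_mk] at hcoeff
  rw [hcoeff, Finset.sum_mul]
  refine Finset.sum_congr rfl fun ij hij ↦ ?_
  rw [← Finset.HasAntidiagonal.mem_antidiagonal.1 hij, pow_add]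
  ring

end EulerTransformation

section GaussSummation

variable {a b c : ℝ}

theorem integral_rpow_mul_one_sub_rpow_eq_beta (ha : 0 < a) (hb : 0 < b) :
    ∫ t in Set.Ioo (0 : ℝ) 1, t ^ (a - 1) * (1 - t) ^ (b - 1) = ProbabilityTheory.beta a b := by
  have hβ := ProbabilityTheory.beta_pos ha hb
  have hpdf : ∫ t in Set.Ioo (0 : ℝ) 1,
      1 / ProbabilityTheory.beta a b * t ^ (a - 1) * (1 - t) ^ (b - 1) = 1 := by
    rw [integral_eq_lintegral_of_nonneg_ae, ← ProbabilityTheory.lintegral_betaPDF,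
      ProbabilityTheory.lintegral_betaPDF_eq_one ha hb, ENNReal.toReal_one]
    · refine ae_restrict_of_forall_mem measurableSet_Ioo fun t ht ↦ ?_
      have := ht.1.le
      have := sub_nonneg.2 ht.2.le
      positivity
    · exact Measurable.aestronglyMeasurable (by fun_prop)
  simp_rw [mul_assoc, integral_const_mul] at hpdf
  field_simp at hpdf
  exact hpdf

theorem integrableOn_rpow_mul_one_sub_rpow (ha : 0 < a) (hb : 0 < b) :
    IntegrableOn (fun t : ℝ ↦ t ^ (a - 1) * (1 - t) ^ (b - 1)) (Set.Ioo 0 1) := by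
  apply not_imp_comm.1 integral_undef
  rw [integral_rpow_mul_one_sub_rpow_eq_beta ha hb]
  exact (ProbabilityTheory.beta_pos ha hb).ne'

theorem Gamma_add_natCast_eq_ascPochhammer_mul_Gamma (ha : ∀ n : ℕ, a + n ≠ 0) (n : ℕ) :
    Gamma (a + n) = (ascPochhammer ℝ n).eval a * Gamma a := by
  induction n with
  | zero => simp
  | succ n ih =>
    rw [Nat.cast_succ, ← add_assoc, Gamma_add_one (ha n), ih, ascPochhammer_succ_eval]
    ring

theorem ordinaryHypergeometricCoefficient_one_one_mul_beta (hb : 0 < b) (hbc : b < c) (n : ℕ) :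
    ordinaryHypergeometricCoefficient a 1 1 n * ProbabilityTheory.beta (b + n) (c - b) =
      ordinaryHypergeometricCoefficient a b c n * ProbabilityTheory.beta b (c - b) := by
  have hc : 0 < c := hb.trans hbc
  have h1 := (ascPochhammer_pos n (1 : ℝ) one_pos).ne'
  have hΓc := (Gamma_pos_of_pos hc).ne'
  have hpc := (ascPochhammer_pos n c hc).ne'
  simp only [ordinaryHypergeometricCoefficient, ProbabilityTheory.beta]
  rw [show b + n + (c - b) = c + n by ring, add_sub_cancel,
    Gamma_add_natCast_eq_ascPochhammer_mul_Gamma (fun k ↦ by positivity),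
    Gamma_add_natCast_eq_ascPochhammer_mul_Gamma (fun k ↦ by positivity)]
  field_simp

theorem ordinaryHypergeometricCoefficient_nonneg (ha : 0 < a) (hb : 0 < b) (hc : 0 < c) (n : ℕ) :
    0 ≤ ordinaryHypergeometricCoefficient a b c n := by
  have := ascPochhammer_pos n a ha
  have := ascPochhammer_pos n b hb
  have := ascPochhammer_pos n c hc
  positivity

theorem hasSum_ordinaryHypergeometricCoefficient_one_one_mul_rpow {t : ℝ}
    (ht : t ∈ Set.Ioo (0 : ℝ) 1) :
    HasSum (fun n : ℕ ↦ ordinaryHypergeometricCoefficient a 1 1 n *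
        (t ^ (b + n - 1) * (1 - t) ^ (c - b - 1)))
      (t ^ (b - 1) * (1 - t) ^ (c - a - b - 1)) := by
  have h := (hasSum_ordinaryHypergeometric (a := a) (b := 1) (c := 1)
    (abs_lt.2 ⟨by linarith [ht.1], ht.2⟩)).mul_right (t ^ (b - 1) * (1 - t) ^ (c - b - 1))
  rw [ordinaryHypergeometric_one_one_eq_rpow (abs_lt.2 ⟨by linarith [ht.1], ht.2⟩)] at h
  have hterm (n : ℕ) : t ^ n * (t ^ (b - 1) * (1 - t) ^ (c - b - 1)) =
      t ^ (b + n - 1) * (1 - t) ^ (c - b - 1) := by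
    rw [show b + n - 1 = b - 1 + n by ring, rpow_add_natCast ht.1.ne']
    ring
  have hvalue : (1 - t) ^ (-a) * (t ^ (b - 1) * (1 - t) ^ (c - b - 1)) =
      t ^ (b - 1) * (1 - t) ^ (c - a - b - 1) := by
    rw [show c - a - b - 1 = -a + (c - b - 1) by ring, rpow_add (sub_pos.2 ht.2)]
    ring
  simpa only [mul_assoc, hterm, hvalue] using h

theorem hasSum_ordinaryHypergeometricCoefficient_mul_beta (ha : 0 < a) (hb : 0 < b)
    (habc : a + b < c) :
    HasSum (fun n ↦ ordinaryHypergeometricCoefficient a b c n * ProbabilityTheory.beta b (c - b))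
      (ProbabilityTheory.beta b (c - a - b)) := by
  let term (n : ℕ) (t : ℝ) : ℝ := ordinaryHypergeometricCoefficient a 1 1 n *
    (t ^ (b + n - 1) * (1 - t) ^ (c - b - 1))
  have hterm_nonneg (n : ℕ) {t : ℝ} (ht : t ∈ Set.Ioo (0 : ℝ) 1) : 0 ≤ term n t :=
    mul_nonneg (ordinaryHypergeometricCoefficient_nonneg ha one_pos one_pos n)
      (mul_nonneg (rpow_nonneg ht.1.le _) (rpow_nonneg (sub_nonneg.2 ht.2.le) _))
  have hterm_sum {t : ℝ} (ht : t ∈ Set.Ioo (0 : ℝ) 1) :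
      HasSum (term · t) (t ^ (b - 1) * (1 - t) ^ (c - a - b - 1)) :=
    hasSum_ordinaryHypergeometricCoefficient_one_one_mul_rpow ht
  have hterm_integral (n : ℕ) : ∫ t in Set.Ioo (0 : ℝ) 1, term n t =
      ordinaryHypergeometricCoefficient a b c n * ProbabilityTheory.beta b (c - b) := by
    rw [integral_const_mul, integral_rpow_mul_one_sub_rpow_eq_beta (by positivity) (by linarith),
      ordinaryHypergeometricCoefficient_one_one_mul_beta hb (by linarith)]
  simp only [← hterm_integral]
  rw [← integral_rpow_mul_one_sub_rpow_eq_beta hb (by linarith)]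
  -- The terms are nonnegative, so they serve as their own dominating functions.
  exact hasSum_integral_of_dominated_convergence term
    (fun n ↦ Measurable.aestronglyMeasurable (by fun_prop))
    (fun n ↦ ae_restrict_of_forall_mem measurableSet_Ioo fun t ht ↦
      (norm_of_nonneg (hterm_nonneg n ht)).le)
    (ae_restrict_of_forall_mem measurableSet_Ioo fun t ht ↦ (hterm_sum ht).summable)
    ((integrableOn_rpow_mul_one_sub_rpow hb (by linarith)).congr_fun
      (fun t ht ↦ (hterm_sum ht).tsum_eq.symm) measurableSet_Ioo)
    (ae_restrict_of_forall_mem measurableSet_Ioo fun t ht ↦ hterm_sum ht)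

theorem hasSum_ordinaryHypergeometricCoefficient_gauss (ha : 0 < a) (hb : 0 < b)
    (habc : a + b < c) :
    HasSum (ordinaryHypergeometricCoefficient a b c)
      (Gamma c * Gamma (c - a - b) / (Gamma (c - a) * Gamma (c - b))) := by
  have hcb : 0 < c - b := by linarith
  have hΓb := (Gamma_pos_of_pos hb).ne'
  have hΓcb := (Gamma_pos_of_pos hcb).ne'
  have hΓc := (Gamma_pos_of_pos (show 0 < c by linarith)).ne'
  have hbeta : ProbabilityTheory.beta b (c - a - b) =
      Gamma c * Gamma (c - a - b) / (Gamma (c - a) * Gamma (c - b)) *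
        ProbabilityTheory.beta b (c - b) := by
    simp only [ProbabilityTheory.beta]
    rw [show b + (c - a - b) = c - a by ring, add_sub_cancel]
    field_simp
  rw [← hasSum_mul_right_iff (ProbabilityTheory.beta_pos hb hcb).ne', ← hbeta]
  exact hasSum_ordinaryHypergeometricCoefficient_mul_beta ha hb habc

end GaussSummation

section BoundaryValue

open scoped Topology

variable {a b c : ℝ}

theorem hasSum_ordinaryHypergeometric_one
    (h : Summable (ordinaryHypergeometricCoefficient a b c)) :
    HasSum (ordinaryHypergeometricCoefficient a b c) (₂F₁ a b c (1 : ℝ)) := by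
  simpa only [ordinaryHypergeometric_eq_tsum, one_pow, smul_eq_mul, mul_one] using h.hasSum

theorem tendsto_ordinaryHypergeometric_nhdsLT_one
    (h : Summable (ordinaryHypergeometricCoefficient a b c)) :
    Tendsto (₂F₁ a b c : ℝ → ℝ) (𝓝[<] 1) (𝓝 (₂F₁ a b c 1)) := by
  have habel := Real.tendsto_tsum_powerSeries_nhdsWithin_lt
    (hasSum_ordinaryHypergeometric_one h).tendsto_sum_nat
  simpa only [ordinaryHypergeometric_eq_tsum, smul_eq_mul] using habel

theorem summable_ordinaryHypergeometricCoefficient_of_add_one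
    (h : Summable (ordinaryHypergeometricCoefficient (a + 1) (b + 1) (c + 1))) :
    Summable (ordinaryHypergeometricCoefficient a b c) := by
  rw [← summable_nat_add_iff 1]
  refine .of_norm_bounded (h.mul_left (a * b / c)).abs fun n ↦ ?_
  rw [norm_eq_abs, ← succ_mul_ordinaryHypergeometricCoefficient_succ, abs_mul (n + 1 : ℝ)]
  refine le_mul_of_one_le_left (abs_nonneg _) ?_
  rw [abs_of_nonneg (by positivity)]
  linarith [n.cast_nonneg (α := ℝ)]

end BoundaryValue

section Kernel

open scoped Topology

variable {δ s r : ℝ}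

/-- The argument `z(s,r) = s(1-r) / (r(1-s))` of the hypergeometric function in the kernel. -/
noncomputable def crossRatio (s r : ℝ) : ℝ := s * (1 - r) / (r * (1 - s))

theorem crossRatio_mem_Ioo (hs : 0 < s) (hsr : s < r) (hr : r < 1) :
    crossRatio s r ∈ Set.Ioo 0 1 := by
  have : 0 < r := hs.trans hsr
  have : 0 < 1 - r := sub_pos.2 hr
  have : 0 < 1 - s := sub_pos.2 (hsr.trans hr)
  refine ⟨by unfold crossRatio; positivity, ?_⟩
  rw [crossRatio, div_lt_one (by positivity)]
  linarith

theorem crossRatio_self (hs0 : s ≠ 0) (hs1 : s ≠ 1) : crossRatio s s = 1 :=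
  div_self (mul_ne_zero hs0 (sub_ne_zero.2 hs1.symm))

theorem one_sub_crossRatio (hs : s ≠ 1) (hr : r ≠ 0) :
    1 - crossRatio s r = (r - s) / (r * (1 - s)) := by
  have := sub_ne_zero.2 hs.symm
  rw [crossRatio]
  field_simp
  ring

theorem hasDerivAt_crossRatio (hs : s ≠ 1) (hr0 : r ≠ 0) (hr1 : r ≠ 1) :
    HasDerivAt (crossRatio s) (-(crossRatio s r / (r * (1 - r)))) r := by
  have hs' : 1 - s ≠ 0 := sub_ne_zero.2 hs.symm
  have hr1' : 1 - r ≠ 0 := sub_ne_zero.2 hr1.symm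
  refine HasDerivAt.congr_deriv (((hasDerivAt_id' r).const_sub 1 |>.const_mul s).fun_div
    ((hasDerivAt_id' r).mul_const (1 - s)) (mul_ne_zero hr0 hs')) ?_
  rw [crossRatio]
  field_simp
  ring

theorem tendsto_crossRatio_nhdsWithin_Ioo (hs : s ∈ Set.Ioo 0 1) :
    Tendsto (crossRatio s) (𝓝[Set.Ioo s 1] s) (𝓝[<] 1) := by
  refine tendsto_nhdsWithin_of_tendsto_nhds_of_eventually_within _ ?_ ?_
  · rw [← crossRatio_self hs.1.ne' hs.2.ne]
    exact (hasDerivAt_crossRatio hs.2.ne hs.1.ne' hs.2.ne).continuousAt.continuousWithinAt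
  · filter_upwards [self_mem_nhdsWithin] with r hr
    exact (crossRatio_mem_Ioo hs.1 hr.1 hr.2).2

/-- The factor `₂F₁(-1/2, -1/2, δ/2, ·)` that Euler's transformation leaves in the kernel. -/
noncomputable def kernelProfile (δ : ℝ) : ℝ → ℝ := ₂F₁ (-(1 / 2)) (-(1 / 2)) (δ / 2)

theorem hasDerivAt_kernelProfile {z : ℝ} (hz : |z| < 1) :
    HasDerivAt (kernelProfile δ) ((2 * δ)⁻¹ * ₂F₁ (1 / 2) (1 / 2) (δ / 2 + 1) z) z := by
  have hcoef : -(1 / 2 : ℝ) * -(1 / 2) / (δ / 2) = (2 * δ)⁻¹ := by ring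
  have hshift : -(1 / 2 : ℝ) + 1 = 1 / 2 := by norm_num
  have h := hasDerivAt_ordinaryHypergeometric (a := -(1 / 2)) (b := -(1 / 2)) (c := δ / 2) hz
  rwa [hcoef, hshift] at h

theorem Kcoef_pos (hδ : 0 < δ) : 0 < Kcoef δ := by
  have := Gamma_pos_of_pos (half_pos hδ)
  have := Gamma_pos_of_pos (show 0 < (δ + 1) / 2 by linarith)
  unfold Kcoef
  positivity

theorem hasSum_ordinaryHypergeometricCoefficient_half_half (hδ : 0 < δ) :
    HasSum (ordinaryHypergeometricCoefficient (1 / 2) (1 / 2) (δ / 2 + 1)) (δ / Kcoef δ) := by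
  have hΓ := (Gamma_pos_of_pos (half_pos hδ)).ne'
  have hΓ' := (Gamma_pos_of_pos (show 0 < (δ + 1) / 2 by linarith)).ne'
  convert hasSum_ordinaryHypergeometricCoefficient_gauss (a := 1 / 2) (b := 1 / 2)
    (c := δ / 2 + 1) (by norm_num) (by norm_num) (by linarith) using 1
  rw [show δ / 2 + 1 - 1 / 2 - 1 / 2 = δ / 2 by ring,
    show δ / 2 + 1 - 1 / 2 = (δ + 1) / 2 by ring, Gamma_add_one (half_pos hδ).ne', Kcoef]
  field_simp

theorem tendsto_kernelProfile (hδ : 0 < δ) :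
    Tendsto (kernelProfile δ) (𝓝[<] 1) (𝓝 (kernelProfile δ 1)) := by
  refine tendsto_ordinaryHypergeometric_nhdsLT_one
    (summable_ordinaryHypergeometricCoefficient_of_add_one ?_)
  rw [show -(1 / 2 : ℝ) + 1 = 1 / 2 by norm_num]
  exact (hasSum_ordinaryHypergeometricCoefficient_half_half hδ).summable

theorem tendsto_deriv_kernelProfile (hδ : 0 < δ) :
    Tendsto (deriv (kernelProfile δ)) (𝓝[<] 1) (𝓝 (2 * Kcoef δ)⁻¹) := by
  have hsum := hasSum_ordinaryHypergeometricCoefficient_half_half hδ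
  have hlim := (tendsto_ordinaryHypergeometric_nhdsLT_one hsum.summable).const_mul (2 * δ)⁻¹
  rw [(hasSum_ordinaryHypergeometric_one hsum.summable).unique hsum] at hlim
  convert hlim.congr' ?_ using 2
  · field_simp
  · filter_upwards [Ioo_mem_nhdsLT (show (-1 : ℝ) < 1 by norm_num)] with z hz
    exact (hasDerivAt_kernelProfile (abs_lt.2 hz)).deriv.symm

theorem hyp2F1_eq_ordinaryHypergeometric (a b c : ℝ) : hyp2F1 a b c = ₂F₁ a b c := by
  have poch_eq (x : ℝ) (k : ℕ) : poch x k = (ascPochhammer ℝ k).eval x := by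
    induction k with
    | zero => simp [poch]
    | succ k ih => rw [ascPochhammer_succ_eval, ← ih, poch, poch, Finset.prod_range_succ]
  ext z
  rw [hyp2F1, ordinaryHypergeometric_eq_tsum]
  refine tsum_congr fun k ↦ ?_
  rw [poch_eq, poch_eq, poch_eq, smul_eq_mul]
  ring

theorem twoPt_eq_sqrt_mul_kernelProfile (hδ : 0 < δ) (hs : 0 < s) (hsr : s < r) (hr : r < 1) :
    twoPt δ s r =
      Kcoef δ * √(s * (1 - s)) * (√(r * (1 - r)) * kernelProfile δ (crossRatio s r)) := by
  have hr0 : 0 < r := hs.trans hsr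
  have : 0 < 1 - r := sub_pos.2 hr
  have hs1 : 0 < 1 - s := sub_pos.2 (hsr.trans hr)
  have hrs : 0 < r - s := sub_pos.2 hsr
  have hz := crossRatio_mem_Ioo hs hsr hr
  have heuler : hyp2F1 ((δ + 1) / 2) ((δ + 1) / 2) (δ / 2) (crossRatio s r) =
      (1 - crossRatio s r) ^ (-(δ / 2 + 1)) * kernelProfile δ (crossRatio s r) := by
    rw [hyp2F1_eq_ordinaryHypergeometric, ordinaryHypergeometric_euler_transformation
      (fun n ↦ by positivity) (abs_lt.2 ⟨by linarith [hz.1], hz.2⟩), kernelProfile]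
    congr 3 <;> ring
  have hpow : (r - s) ^ (δ / 2 + 1) * ((r - s) / (r * (1 - s))) ^ (-(δ / 2 + 1)) *
      (r * (1 - s)) ^ (-((δ + 1) / 2)) = (r * (1 - s)) ^ (1 / 2 : ℝ) := by
    rw [rpow_neg (by positivity), div_rpow hrs.le (by positivity), inv_div,
      mul_div_cancel₀ _ (by positivity), ← rpow_add (by positivity)]
    congr 1
    ring
  have hsqrt : (s * (1 - r)) ^ (1 / 2 : ℝ) * (r * (1 - s)) ^ (1 / 2 : ℝ) =
      √(s * (1 - s)) * √(r * (1 - r)) := by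
    rw [← sqrt_eq_rpow, ← sqrt_eq_rpow, ← sqrt_mul (by positivity), ← sqrt_mul (by positivity)]
    congr 1
    ring
  rw [twoPt, if_pos hsr, ← crossRatio, heuler, one_sub_crossRatio (by linarith) hr0.ne']
  linear_combination Kcoef δ * kernelProfile δ (crossRatio s r) *
    ((s * (1 - r)) ^ (1 / 2 : ℝ) * hpow + hsqrt)

theorem hasDerivAt_twoPt_s12 (hδ : 0 < δ) (hs : 0 < s) (hsr : s < r) (hr : r < 1) :
    HasDerivAt (twoPt δ s) (Kcoef δ * √(s * (1 - s)) *
      (((1 - 2 * r) / 2 * kernelProfile δ (crossRatio s r) -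
        crossRatio s r * deriv (kernelProfile δ) (crossRatio s r)) / √(r * (1 - r)))) r := by
  have hr0 : 0 < r := hs.trans hsr
  have : 0 < 1 - r := sub_pos.2 hr
  have hz := crossRatio_mem_Ioo hs hsr hr
  have : 0 < √(r * (1 - r)) := by positivity
  have hsqrt : HasDerivAt (fun r ↦ √(r * (1 - r))) ((1 - 2 * r) / (2 * √(r * (1 - r)))) r := by
    refine (((hasDerivAt_id' r).fun_mul ((hasDerivAt_id' r).const_sub 1)).sqrt
      (by positivity)).congr_deriv ?_
    ring
  have hprofile : HasDerivAt (kernelProfile δ ∘ crossRatio s) _ r :=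
    (hasDerivAt_kernelProfile
      (abs_lt.2 ⟨by linarith [hz.1], hz.2⟩)).differentiableAt.hasDerivAt.comp r
      (hasDerivAt_crossRatio (hsr.trans hr).ne hr0.ne' hr.ne)
  have heq : twoPt δ s =ᶠ[𝓝 r] fun r ↦
      Kcoef δ * √(s * (1 - s)) * (√(r * (1 - r)) * kernelProfile δ (crossRatio s r)) := by
    filter_upwards [Ioo_mem_nhds hsr hr] with x hx
    exact twoPt_eq_sqrt_mul_kernelProfile hδ hs hx.1 hx.2
  refine (((hsqrt.mul hprofile).const_mul _).congr_of_eventuallyEq heq).congr_deriv ?_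
  congr 1
  rw [Function.comp_apply]
  have hsq := mul_self_sqrt (show 0 ≤ r * (1 - r) by positivity)
  field_simp
  linear_combination -2 * crossRatio s r * deriv (kernelProfile δ) (crossRatio s r) * hsq

theorem tendsto_deriv_twoPt_right (hδ : 0 < δ) (hs : s ∈ Set.Ioo 0 1) :
    Tendsto (deriv (twoPt δ s)) (𝓝[Set.Ioo s 1] s)
      (𝓝 (Kcoef δ * ((1 - 2 * s) / 2 * kernelProfile δ 1) - 1 / 2)) := by
  have hK := (Kcoef_pos hδ).ne'
  have hpos : 0 < √(s * (1 - s)) := sqrt_pos.2 (mul_pos hs.1 (sub_pos.2 hs.2))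
  have hcross := tendsto_crossRatio_nhdsWithin_Ioo hs
  have hid : Tendsto id (𝓝[Set.Ioo s 1] s) (𝓝 s) := tendsto_id'.2 nhdsWithin_le_nhds
  have hsqrt : Tendsto (fun r ↦ √(r * (1 - r))) (𝓝[Set.Ioo s 1] s)
      (𝓝 √(s * (1 - s))) := (hid.mul (hid.const_sub 1)).sqrt
  have hlim := ((((hid.const_mul 2).const_sub 1).div_const 2 |>.mul
    ((tendsto_kernelProfile hδ).comp hcross)).sub ((hcross.mono_right nhdsWithin_le_nhds).mul
      ((tendsto_deriv_kernelProfile hδ).comp hcross)) |>.div hsqrt hpos.ne').const_mul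
        (Kcoef δ * √(s * (1 - s)))
  convert hlim.congr' ?_ using 2
  · field_simp
  · filter_upwards [self_mem_nhdsWithin] with r hr
    exact (hasDerivAt_twoPt_s12 hδ hs.1 hr.1 hr.2).deriv.symm

theorem twoPt_one_sub_one_sub (δ s r : ℝ) : twoPt δ (1 - s) (1 - r) = twoPt δ s r := by
  rcases lt_trichotomy s r with hsr | rfl | hrs
  · rw [twoPt, twoPt, if_pos hsr, if_neg (by linarith)]
    ring_nf
  · rw [twoPt, twoPt, if_neg (lt_irrefl s), if_neg (lt_irrefl (1 - s))]
    ring_nf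
  · rw [twoPt, twoPt, if_neg hrs.not_gt, if_pos (by linarith)]
    ring_nf

theorem deriv_twoPt_one_sub_one_sub (δ s r : ℝ) :
    deriv (twoPt δ (1 - s)) (1 - r) = -deriv (twoPt δ s) r := by
  rw [← neg_eq_iff_eq_neg, ← deriv_comp_const_sub]
  simp only [twoPt_one_sub_one_sub]

theorem tendsto_deriv_twoPt_left (hδ : 0 < δ) (hs : s ∈ Set.Ioo 0 1) :
    Tendsto (deriv (twoPt δ s)) (𝓝[Set.Ioo 0 s] s)
      (𝓝 (Kcoef δ * ((1 - 2 * s) / 2 * kernelProfile δ 1) + 1 / 2)) := by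
  have hreflect : Tendsto (1 - ·) (𝓝[Set.Ioo 0 s] s)
      (𝓝[Set.Ioo (1 - s) 1] (1 - s)) := by
    refine tendsto_nhdsWithin_of_tendsto_nhds_of_eventually_within _
      ((continuous_sub_left 1).tendsto s |>.mono_left nhdsWithin_le_nhds) ?_
    filter_upwards [self_mem_nhdsWithin] with r hr
    exact ⟨by linarith [hr.2], by linarith [hr.1]⟩
  have hlim := ((tendsto_deriv_twoPt_right hδ (s := 1 - s)
    ⟨by linarith [hs.2], by linarith [hs.1]⟩).comp hreflect).neg
  simp only [Function.comp_def, deriv_twoPt_one_sub_one_sub, neg_neg] at hlim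
  convert hlim using 2
  ring

end Kernel

theorem twoPt_deriv_jump (δ : ℝ) (hδ : 0 < δ) (s : ℝ) (hs : s ∈ Set.Ioo (0 : ℝ) 1) :
    ∃ Lplus Lminus : ℝ,
      Tendsto (fun r => deriv (fun r => twoPt δ s r) r)
        (nhdsWithin s (Set.Ioo s 1)) (nhds Lplus) ∧
      Tendsto (fun r => deriv (fun r => twoPt δ s r) r)
        (nhdsWithin s (Set.Ioo 0 s)) (nhds Lminus) ∧
      Lplus - Lminus = -1 :=
  ⟨_, _, tendsto_deriv_twoPt_right hδ hs, tendsto_deriv_twoPt_left hδ hs, by ring⟩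
end

section
/- Let δ>0 and r ∈ (0,1). Then the double integral of the absolute value of b^{δ−1} times the third b-derivative of Σ^δ_{r,s}(b) is finite: ∫₀¹ ∫₀^∞ b^{δ−1} |(d³/db³)Σ^δ_{r,s}(b)| db ds < ∞. -/
open MeasureTheory Real Filter

/-!
Put `d = |s - r|` and `c = 1 / (2 r (1 - r))`. Since `D / 2 = c + κ` with `0 < κ ≤ 1 / d`, and the
series is the exponential generating function of `u k = Γ(k + (δ + 1) / 2) / Γ(k + δ / 2)` at
`κ b ^ 2`, `Σ^δ_{r,s}(b)` is `O(√d)` times `exp (-c b ^ 2) Ψ(κ b ^ 2)`, where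
`Ψ z = exp (-z) ∑ u k z ^ k / k!` is the Poisson transform of `u`. Differentiating `Ψ` amounts to
taking forward differences of `u`, and the functional equation of `Γ` shows that each difference
gains a factor `1 / k`, so `Ψ` satisfies the symbol estimates `|Ψ⁽ⁱ⁾(z)| ≤ M (1 + z) ^ (1 - i)`.
By Leibniz' rule each derivative in `y = b ^ 2` then costs only a factor `1 / (d + y)`, up to
polynomial factors absorbed by the Gaussian, and
`∂_b³ F(b ^ 2) = 12 b F⁽²⁾(b ^ 2) + 8 b ^ 3 F⁽³⁾(b ^ 2)` gives
`|∂_b³ Σ| ≤ C d ^ (-1 / 2) (b / (d + b ^ 2)) exp (-c b ^ 2 / 2)`. By AM-GM,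
`b / (d + b ^ 2) ≤ d ^ ((q - 1) / 2) b ^ (-q)`, and for `0 < q < δ` with `q ≤ 1` both
`d ^ (q / 2 - 1)` and `b ^ (δ - 1 - q) exp (-c b ^ 2 / 2)` are integrable.
-/

open scoped Nat fwdDiff

section PoissonTransform

/-- The exponential generating function `∑ u k z ^ k / k!` converges for every real `z`, so that
`poissonTransform u` is nowhere a junk value. -/
def HasEntireEGF (u : ℕ → ℝ) : Prop := ∀ z : ℝ, Summable fun k : ℕ => u k * (z ^ k / k !)

/-- The Poisson transform `z ↦ E[u(N)]`, with `N` Poisson distributed of parameter `z`, of a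
sequence `u`; the defining formula is also used for `z < 0`. -/
noncomputable def poissonTransform (u : ℕ → ℝ) (z : ℝ) : ℝ :=
  exp (-z) * ∑' k : ℕ, u k * (z ^ k / k !)

variable {u : ℕ → ℝ}

lemma HasEntireEGF.of_abs_le {M C : ℝ} (hu : ∀ k, |u k| ≤ M * C ^ k) : HasEntireEGF u := by
  intro z
  refine .of_norm_bounded ((summable_pow_div_factorial (C * |z|)).mul_left M) fun k => ?_
  rw [norm_eq_abs, abs_mul, abs_div, abs_pow, Nat.abs_cast, mul_pow, mul_div_assoc, ← mul_assoc]
  gcongr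
  exact hu k

lemma HasEntireEGF.of_abs_le_mul_succ {M : ℝ} (hu : ∀ k : ℕ, |u k| ≤ M * (k + 1)) :
    HasEntireEGF u := by
  have hM : 0 ≤ M := (abs_nonneg (u 0)).trans (by simpa using hu 0)
  refine .of_abs_le (M := M) (C := 2) fun k => (hu k).trans ?_
  gcongr
  exact_mod_cast k.lt_two_pow_self

lemma HasEntireEGF.comp_succ (hu : HasEntireEGF u) : HasEntireEGF fun k => u (k + 1) := by
  intro z
  set R := |z| + 1
  refine .of_norm_bounded ((summable_nat_add_iff 1).2 (hu (2 * R)).norm) fun k => ?_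
  have hR : 1 ≤ R := le_add_of_nonneg_left (abs_nonneg z)
  have hk : (k + 1 : ℝ) ≤ 2 ^ (k + 1) := by exact_mod_cast (k + 1).lt_two_pow_self.le
  rw [norm_mul, norm_mul, norm_of_nonneg (by positivity : 0 ≤ (2 * R) ^ (k + 1) / (k + 1)!),
    norm_div, norm_pow, norm_natCast, norm_eq_abs z]
  gcongr ‖u (k + 1)‖ * ?_
  calc |z| ^ k / k ! = (k + 1) * |z| ^ k / (k + 1)! := by
        rw [Nat.factorial_succ]; push_cast; field_simp
    _ ≤ 2 ^ (k + 1) * R ^ k / (k + 1)! := by gcongr; exact le_add_of_nonneg_right zero_le_one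
    _ ≤ 2 ^ (k + 1) * R ^ (k + 1) / (k + 1)! := by gcongr; exact k.le_succ
    _ = (2 * R) ^ (k + 1) / (k + 1)! := by rw [mul_pow]

lemma HasEntireEGF.fwdDiff (hu : HasEntireEGF u) : HasEntireEGF (Δ_[1] u) := fun z =>
  ((hu.comp_succ z).sub (hu z)).congr fun k => by rw [_root_.fwdDiff]; ring

lemma HasEntireEGF.hasDerivAt_tsum (hu : HasEntireEGF u) (z : ℝ) :
    HasDerivAt (fun y : ℝ => ∑' k : ℕ, u k * (y ^ k / k !))
      (∑' k : ℕ, u (k + 1) * (z ^ k / k !)) z := by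
  set R := |z| + 1
  have succ_term (k : ℕ) (y : ℝ) :
      u (k + 1) * ((k + 1 : ℕ) * y ^ k / (k + 1)!) = u (k + 1) * (y ^ k / k !) := by
    rw [Nat.factorial_succ]; push_cast; field_simp
  have bound_summable : Summable fun k : ℕ => |u k| * (k * R ^ (k - 1) / k !) := by
    refine (summable_nat_add_iff 1).1 ((hu.comp_succ R).norm.congr fun k => ?_)
    rw [← succ_term, norm_mul, norm_eq_abs, norm_of_nonneg (by positivity), Nat.add_sub_cancel]
  have term_le (k : ℕ) (y : ℝ) (hy : |y| < R) :
      ‖u k * (k * y ^ (k - 1) / k !)‖ ≤ |u k| * (k * R ^ (k - 1) / k !) := by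
    rw [norm_eq_abs, abs_mul, abs_div, abs_mul, abs_pow, Nat.abs_cast, Nat.abs_cast]
    gcongr
  have hz : |z| < R := lt_add_one _
  have deriv_tsum := hasDerivAt_tsum_of_isPreconnected (y₀ := z) bound_summable
    Metric.isOpen_ball (convex_ball (0 : ℝ) R).isPreconnected
    (fun k y _ => ((hasDerivAt_pow k y).div_const (k ! : ℝ)).const_mul (u k))
    (fun k y hy => term_le k y (by simpa using hy)) (by simpa using hz) (hu z) (by simpa using hz)
  convert! deriv_tsum using 1
  rw [(Summable.of_norm_bounded bound_summable fun k => term_le k z hz).tsum_eq_zero_add]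
  simp only [Nat.cast_zero, zero_mul, zero_div, mul_zero, zero_add, Nat.add_sub_cancel, succ_term]

lemma HasEntireEGF.hasDerivAt_poissonTransform (hu : HasEntireEGF u) (z : ℝ) :
    HasDerivAt (poissonTransform u) (poissonTransform (Δ_[1] u) z) z := by
  refine ((hasDerivAt_neg z).exp.mul (hu.hasDerivAt_tsum z)).congr_deriv ?_
  have tsum_fwdDiff : ∑' k : ℕ, Δ_[1] u k * (z ^ k / k !) =
      ∑' k : ℕ, u (k + 1) * (z ^ k / k !) - ∑' k : ℕ, u k * (z ^ k / k !) := by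
    rw [← (hu.comp_succ z).tsum_sub (hu z)]
    exact tsum_congr fun k => by rw [_root_.fwdDiff]; ring
  rw [poissonTransform, tsum_fwdDiff]
  ring

lemma HasEntireEGF.deriv_poissonTransform (hu : HasEntireEGF u) :
    deriv (poissonTransform u) = poissonTransform (Δ_[1] u) :=
  funext fun z => (hu.hasDerivAt_poissonTransform z).deriv

lemma HasEntireEGF.contDiff_poissonTransform (hu : HasEntireEGF u) (n : ℕ) :
    ContDiff ℝ n (poissonTransform u) := by
  induction n generalizing u with
  | zero =>
    exact contDiff_zero.2 <| continuous_iff_continuousAt.2 fun z =>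
      (hu.hasDerivAt_poissonTransform z).continuousAt
  | succ n ih =>
    rw [Nat.cast_succ, contDiff_succ_iff_deriv, hu.deriv_poissonTransform]
    exact ⟨fun z => (hu.hasDerivAt_poissonTransform z).differentiableAt, by simp, ih hu.fwdDiff⟩

lemma HasEntireEGF.iteratedDeriv_poissonTransform (hu : HasEntireEGF u) (n : ℕ) :
    iteratedDeriv n (poissonTransform u) = poissonTransform ((Δ_[1])^[n] u) := by
  induction n generalizing u with
  | zero => rfl
  | succ n ih =>
    rw [iteratedDeriv_succ', hu.deriv_poissonTransform, ih hu.fwdDiff, Function.iterate_succ_apply]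

lemma hasSum_mul_pred_egf {z S : ℝ} (h : HasSum (fun k : ℕ => u k * (z ^ k / k !)) S) :
    HasSum (fun k : ℕ => k * u (k - 1) * (z ^ k / k !)) (z * S) := by
  rw [← hasSum_nat_add_iff' 1]
  simp only [Finset.sum_range_one, Nat.cast_zero, zero_mul, sub_zero, Nat.add_sub_cancel]
  convert! h.mul_left z using 2 with k
  rw [Nat.factorial_succ]; push_cast; field_simp; ring

lemma abs_poissonTransform_le {M z : ℝ} (hu : ∀ k : ℕ, |u k| ≤ M * (k + 1)) (hz : 0 ≤ z) :
    |poissonTransform u z| ≤ M * (1 + z) := by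
  have exp_sum : HasSum (fun k : ℕ => 1 * (z ^ k / k !)) (exp z) := by
    simpa [exp_eq_exp_ℝ] using NormedSpace.expSeries_div_hasSum_exp z
  have majorant_sum : HasSum (fun k : ℕ => M * (k + 1) * (z ^ k / k !)) (M * (1 + z) * exp z) := by
    convert! ((hasSum_mul_pred_egf (u := 1) exp_sum).add exp_sum).mul_left M using 1
    · ext k; simp only [Pi.one_apply]; ring
    · ring
  have tsum_le : |∑' k : ℕ, u k * (z ^ k / k !)| ≤ M * (1 + z) * exp z := by
    refine tsum_of_norm_bounded (E := ℝ) majorant_sum fun k => ?_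
    rw [norm_mul, norm_of_nonneg (by positivity : 0 ≤ z ^ k / k !), norm_eq_abs]
    gcongr
    exact hu k
  calc |poissonTransform u z| = exp (-z) * |∑' k : ℕ, u k * (z ^ k / k !)| := by
        rw [poissonTransform, abs_mul, abs_exp]
    _ ≤ exp (-z) * (M * (1 + z) * exp z) := by gcongr
    _ = M * (1 + z) := by rw [mul_left_comm, ← exp_add, neg_add_cancel, exp_zero, mul_one]

lemma HasEntireEGF.one_add_mul_poissonTransform (hu : HasEntireEGF u) (z : ℝ) :
    (1 + z) * poissonTransform u z = poissonTransform (fun k => u k + k * u (k - 1)) z := by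
  have h := (hu z).hasSum
  simp only [poissonTransform, add_mul, (h.add (hasSum_mul_pred_egf h)).tsum_eq]
  ring

/-- Multiplication by `1 + z` turns `u k` into `u k + k * u (k - 1)`, which loses one power of
`k + 1`; so the induction reduces to the case `j = 0`. -/
lemma exists_one_add_pow_mul_abs_poissonTransform_le (j : ℕ) {M : ℝ}
    (hu : ∀ k : ℕ, (k + 1) ^ j * |u k| ≤ M * (k + 1)) :
    ∃ C, ∀ z, 0 ≤ z → (1 + z) ^ j * |poissonTransform u z| ≤ C * (1 + z) := by
  induction j generalizing u M with
  | zero => exact ⟨M, fun z hz => by simpa using abs_poissonTransform_le (by simpa using hu) hz⟩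
  | succ j ih =>
    have hM : 0 ≤ M := (abs_nonneg (u 0)).trans (by simpa using hu 0)
    have term_le (k : ℕ) : (k + 1 : ℝ) ^ j * |u k| ≤ M * (k + 1) :=
      le_trans (by gcongr <;> simp) (hu k)
    have shifted_term_le (k : ℕ) : (k + 1 : ℝ) ^ j * |k * u (k - 1)| ≤ 2 ^ j * M * (k + 1) := by
      rcases k with _ | k
      · rw [Nat.cast_zero, zero_mul, abs_zero, mul_zero]
        positivity
      · rw [Nat.add_sub_cancel, abs_mul, Nat.abs_cast]
        push_cast
        calc ((k : ℝ) + 1 + 1) ^ j * ((k + 1) * |u k|)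
            ≤ (2 * (k + 1)) ^ j * ((k + 1) * |u k|) := by gcongr; linarith
          _ = 2 ^ j * ((k + 1) ^ (j + 1) * |u k|) := by rw [mul_pow]; ring
          _ ≤ 2 ^ j * (M * (k + 1)) := by gcongr ?_ * ?_; exact hu k
          _ ≤ 2 ^ j * M * (k + 1 + 1) := by rw [← mul_assoc]; gcongr; simp
    have u_entire : HasEntireEGF u := .of_abs_le_mul_succ fun k =>
      (le_mul_of_one_le_left (abs_nonneg _) (one_le_pow₀ (by simp))).trans (hu k)
    obtain ⟨C, hC⟩ := ih (u := fun k => u k + k * u (k - 1)) (M := M + 2 ^ j * M) fun k => by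
      calc (k + 1 : ℝ) ^ j * |u k + k * u (k - 1)|
          ≤ (k + 1) ^ j * |u k| + (k + 1) ^ j * |k * u (k - 1)| := by
            rw [← mul_add]; gcongr; exact abs_add_le _ _
        _ ≤ (M + 2 ^ j * M) * (k + 1) := by
            rw [add_mul]; exact add_le_add (term_le k) (shifted_term_le k)
    refine ⟨C, fun z hz => ?_⟩
    calc (1 + z) ^ (j + 1) * |poissonTransform u z|
        = (1 + z) ^ j * |(1 + z) * poissonTransform u z| := by
          rw [abs_mul, abs_of_nonneg (by positivity : 0 ≤ 1 + z), pow_succ, mul_assoc]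
      _ ≤ C * (1 + z) := by rw [u_entire.one_add_mul_poissonTransform]; exact hC z hz

end PoissonTransform

section GammaRatio

/-- The quotient `Γ(x + ν) / Γ(x)`, i.e. the rising factorial of `x` with a real exponent `ν`; the
coefficients `C_k` are multiples of `gammaRatio (1 / 2) (k + δ / 2) / k!`. -/
noncomputable def gammaRatio (ν x : ℝ) : ℝ := Gamma (x + ν) / Gamma x

variable {ν x a : ℝ}

lemma gammaRatio_pos (hx : 0 < x) (hxν : 0 < x + ν) : 0 < gammaRatio ν x :=
  div_pos (Gamma_pos_of_pos hxν) (Gamma_pos_of_pos hx)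

lemma gammaRatio_le_rpow (hν₀ : 0 ≤ ν) (hν₁ : ν ≤ 1) (hx : 0 < x) : gammaRatio ν x ≤ x ^ ν := by
  rcases hν₀.eq_or_lt with rfl | hν₀
  · simp [gammaRatio, (Gamma_pos_of_pos hx).ne']
  rcases hν₁.eq_or_lt with rfl | hν₁
  · simp [gammaRatio, Gamma_add_one hx.ne', (Gamma_pos_of_pos hx).ne']
  have hΓ := Gamma_pos_of_pos hx
  rw [gammaRatio, div_le_iff₀ hΓ]
  calc Gamma (x + ν) = Gamma ((1 - ν) * x + ν * (x + 1)) := by ring_nf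
    _ ≤ Gamma x ^ (1 - ν) * Gamma (x + 1) ^ ν :=
      Gamma_mul_add_mul_le_rpow_Gamma_mul_rpow_Gamma hx (by positivity) (sub_pos.2 hν₁) hν₀
        (sub_add_cancel 1 ν)
    _ = x ^ ν * (Gamma x ^ (1 - ν) * Gamma x ^ ν) := by
      rw [Gamma_add_one hx.ne', mul_rpow hx.le hΓ.le]; ring
    _ = x ^ ν * Gamma x := by rw [← rpow_add hΓ, sub_add_cancel, rpow_one]

lemma gammaRatio_sub_one_add_one (hx : x ≠ 0) :
    gammaRatio (ν - 1) (x + 1) = gammaRatio ν x / x := by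
  rw [gammaRatio, gammaRatio, Gamma_add_one hx, div_div, mul_comm, add_add_sub_cancel]

lemma gammaRatio_add_one_sub (hx : x ≠ 0) (hxν : x + ν ≠ 0) :
    gammaRatio ν (x + 1) - gammaRatio ν x = ν * gammaRatio (ν - 1) (x + 1) := by
  have succ_eq : gammaRatio ν (x + 1) = (x + ν) / x * gammaRatio ν x := by
    rw [gammaRatio, gammaRatio, add_right_comm, Gamma_add_one hxν, Gamma_add_one hx,
      div_mul_div_comm]
  rw [succ_eq, gammaRatio_sub_one_add_one hx]
  field_simp
  ring

lemma fwdDiff_iterate_gammaRatio (ha : 0 < a) (haν : 0 < a + ν) (j k : ℕ) :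
    (Δ_[1])^[j] (fun k : ℕ => gammaRatio ν (k + a)) k =
      (descPochhammer ℝ j).eval ν * gammaRatio (ν - j) (k + a + j) := by
  induction j generalizing k with
  | zero => simp
  | succ j ih =>
    have diff := gammaRatio_add_one_sub (x := k + a + j) (ν := ν - j) (by positivity)
      (by rw [add_add_sub_cancel, add_assoc]; positivity)
    rw [Function.iterate_succ_apply', fwdDiff, ih, ih, ← mul_sub, descPochhammer_succ_eval]
    push_cast
    rw [add_right_comm (k : ℝ) 1 a, add_right_comm (k + a : ℝ) 1 j, diff, ← add_assoc, sub_sub,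
      mul_assoc]

lemma pow_mul_gammaRatio_le (hx : 0 < x) (hxν : 0 < x + ν) (j : ℕ) :
    x ^ j * gammaRatio (ν - j) (x + j) ≤ gammaRatio ν x := by
  induction j with
  | zero => simp
  | succ j ih =>
    have hxj : 0 < x + j := by positivity
    have ratio_pos : 0 < gammaRatio (ν - j) (x + j) :=
      gammaRatio_pos hxj (by rwa [add_add_sub_cancel])
    have step := gammaRatio_sub_one_add_one (ν := ν - j) hxj.ne'
    calc x ^ (j + 1) * gammaRatio (ν - (j + 1 : ℕ)) (x + (j + 1 : ℕ))
        = x / (x + j) * (x ^ j * gammaRatio (ν - j) (x + j)) := by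
          push_cast; rw [← add_assoc, ← sub_sub, step]; ring
      _ ≤ 1 * (x ^ j * gammaRatio (ν - j) (x + j)) := by
          gcongr
          exact div_le_one_of_le₀ (le_add_of_nonneg_right j.cast_nonneg) hxj.le
      _ ≤ gammaRatio ν x := by rwa [one_mul]

lemma exists_succ_pow_mul_abs_fwdDiff_gammaRatio_le (hν₀ : 0 ≤ ν) (hν₁ : ν ≤ 1) (ha : 0 < a)
    (j : ℕ) : ∃ M, ∀ k : ℕ,
      (k + 1) ^ j * |(Δ_[1])^[j] (fun k : ℕ => gammaRatio ν (k + a)) k| ≤ M * (k + 1) := by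
  refine ⟨(1 + 1 / a) ^ j * |(descPochhammer ℝ j).eval ν| * (1 + a), fun k => ?_⟩
  have hx : 0 < k + a := by positivity
  have ratio_le : gammaRatio ν (k + a) ≤ (1 + a) * (k + 1) := by
    calc gammaRatio ν (k + a) ≤ (k + a) ^ ν := gammaRatio_le_rpow hν₀ hν₁ hx
      _ ≤ (1 + (k + a)) ^ ν := rpow_le_rpow hx.le (by linarith) hν₀
      _ ≤ (1 + (k + a)) ^ (1 : ℝ) := rpow_le_rpow_of_exponent_le (by linarith) hν₁
      _ ≤ (1 + a) * (k + 1) := by rw [rpow_one]; linarith [mul_nonneg ha.le k.cast_nonneg]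
  have succ_le : (k + 1 : ℝ) ≤ (1 + 1 / a) * (k + a) := by
    have : 0 ≤ k / a := by positivity
    calc (k + 1 : ℝ) ≤ k + 1 + (k / a + a) := by linarith
      _ = (1 + 1 / a) * (k + a) := by field_simp; ring
  have hratio : 0 < gammaRatio (ν - j) (k + a + j) :=
    gammaRatio_pos (by positivity) (by rw [add_add_sub_cancel]; positivity)
  rw [fwdDiff_iterate_gammaRatio ha (by positivity), abs_mul, abs_of_pos hratio]
  calc (k + 1 : ℝ) ^ j * (|(descPochhammer ℝ j).eval ν| * gammaRatio (ν - j) (k + a + j))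
      ≤ ((1 + 1 / a) * (k + a)) ^ j *
          (|(descPochhammer ℝ j).eval ν| * gammaRatio (ν - j) (k + a + j)) := by gcongr
    _ = (1 + 1 / a) ^ j * |(descPochhammer ℝ j).eval ν| *
          ((k + a) ^ j * gammaRatio (ν - j) (k + a + j)) := by rw [mul_pow]; ring
    _ ≤ (1 + 1 / a) ^ j * |(descPochhammer ℝ j).eval ν| * ((1 + a) * (k + 1)) := by
      gcongr ?_ * ?_
      exact (pow_mul_gammaRatio_le hx (by positivity) j).trans ratio_le
    _ = _ := by ring

lemma hasEntireEGF_gammaRatio (hν₀ : 0 ≤ ν) (hν₁ : ν ≤ 1) (ha : 0 < a) :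
    HasEntireEGF fun k => gammaRatio ν (k + a) :=
  let ⟨_, hM⟩ := exists_succ_pow_mul_abs_fwdDiff_gammaRatio_le hν₀ hν₁ ha 0
  .of_abs_le_mul_succ (by simpa using hM)

lemma exists_one_add_pow_mul_abs_iteratedDeriv_poissonTransform_gammaRatio_le
    (hν₀ : 0 ≤ ν) (hν₁ : ν ≤ 1) (ha : 0 < a) (n : ℕ) :
    ∃ M, ∀ i ≤ n, ∀ z, 0 ≤ z →
      (1 + z) ^ i * |iteratedDeriv i (poissonTransform fun k => gammaRatio ν (k + a)) z|
        ≤ M * (1 + z) := by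
  have bound (i : ℕ) : ∃ C, ∀ z, 0 ≤ z →
      (1 + z) ^ i * |iteratedDeriv i (poissonTransform fun k => gammaRatio ν (k + a)) z|
        ≤ C * (1 + z) := by
    obtain ⟨M, hM⟩ := exists_succ_pow_mul_abs_fwdDiff_gammaRatio_le hν₀ hν₁ ha i
    rw [(hasEntireEGF_gammaRatio hν₀ hν₁ ha).iteratedDeriv_poissonTransform]
    exact exists_one_add_pow_mul_abs_poissonTransform_le i hM
  choose C hC using bound
  obtain ⟨M, hM⟩ := ((Set.finite_Iic n).image C).bddAbove
  refine ⟨M, fun i hi z hz => (hC i z hz).trans ?_⟩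
  gcongr
  exact hM (Set.mem_image_of_mem C hi)

end GammaRatio

section GaussianDerivatives

variable {Ψ : ℝ → ℝ} {n : ℕ} {M c κ d y : ℝ}

lemma add_pow_mul_abs_iteratedDeriv_comp_mul_le {i : ℕ} (hΨ : ContDiff ℝ i Ψ)
    (hM : ∀ z, 0 ≤ z → (1 + z) ^ i * |iteratedDeriv i Ψ z| ≤ M * (1 + z))
    (hκ : 0 ≤ κ) (hd : 0 < d) (hκd : κ ≤ d⁻¹) (hy : 0 ≤ y) :
    (d + y) ^ i * |iteratedDeriv i (fun y => Ψ (κ * y)) y| ≤ M * ((d + y) / d) := by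
  have hM₀ : 0 ≤ M :=
    (abs_nonneg (iteratedDeriv i Ψ 0)).trans (by simpa using hM 0 le_rfl)
  have scale_le : (d + y) * κ ≤ 1 + κ * y := by
    linarith [mul_le_mul_of_nonneg_left hκd hd.le, mul_inv_cancel₀ hd.ne', mul_comm κ y]
  have dilate_le : 1 + κ * y ≤ (d + y) / d := by
    rw [add_div, div_self hd.ne', div_eq_inv_mul]
    gcongr
  calc (d + y) ^ i * |iteratedDeriv i (fun y => Ψ (κ * y)) y|
      = ((d + y) * κ) ^ i * |iteratedDeriv i Ψ (κ * y)| := by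
        rw [iteratedDeriv_comp_const_mul hΨ, abs_mul, abs_of_nonneg (by positivity : 0 ≤ κ ^ i),
          mul_pow, mul_assoc]
    _ ≤ (1 + κ * y) ^ i * |iteratedDeriv i Ψ (κ * y)| := by gcongr
    _ ≤ M * (1 + κ * y) := hM _ (by positivity)
    _ ≤ M * ((d + y) / d) := by gcongr

lemma add_pow_mul_abs_iteratedDeriv_exp_mul_comp_mul_le (hΨ : ContDiff ℝ n Ψ)
    (hM : ∀ i ≤ n, ∀ z, 0 ≤ z → (1 + z) ^ i * |iteratedDeriv i Ψ z| ≤ M * (1 + z))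
    (hc : 0 ≤ c) (hκ : 0 ≤ κ) (hd : 0 < d) (hκd : κ ≤ d⁻¹) (hy : 0 ≤ y) :
    (d + y) ^ n * |iteratedDeriv n (fun y => exp (-c * y) * Ψ (κ * y)) y|
      ≤ M * ((d + y) / d) * (1 + c * (d + y)) ^ n * exp (-c * y) := by
  have leibniz : iteratedDeriv n (fun y => exp (-c * y) * Ψ (κ * y)) y =
      ∑ i ∈ Finset.range (n + 1), n.choose i * ((-c) ^ i * exp (-c * y)) *
        iteratedDeriv (n - i) (fun y => Ψ (κ * y)) y := by
    rw [iteratedDeriv_fun_mul (by fun_prop) (by fun_prop)]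
    simp only [iteratedDeriv_exp_const_mul]
  have binomial : (1 + c * (d + y)) ^ n =
      ∑ i ∈ Finset.range (n + 1), n.choose i * (c * (d + y)) ^ i := by
    rw [add_comm, add_pow]
    exact Finset.sum_congr rfl fun i _ => by rw [one_pow, mul_one, mul_comm]
  rw [leibniz, binomial, Finset.mul_sum, Finset.sum_mul]
  refine (mul_le_mul_of_nonneg_left (Finset.abs_sum_le_sum_abs _ _) (by positivity)).trans ?_
  rw [Finset.mul_sum]
  refine Finset.sum_le_sum fun i hi => ?_
  have hin : i ≤ n := Nat.lt_succ_iff.1 (Finset.mem_range.1 hi)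
  have factor_le := add_pow_mul_abs_iteratedDeriv_comp_mul_le
    (hΨ.of_le (by exact_mod_cast n.sub_le i)) (hM (n - i) (n.sub_le i)) hκ hd hκd hy
  calc (d + y) ^ n * |n.choose i * ((-c) ^ i * exp (-c * y)) *
          iteratedDeriv (n - i) (fun y => Ψ (κ * y)) y|
      = n.choose i * (c * (d + y)) ^ i * exp (-c * y) *
          ((d + y) ^ (n - i) * |iteratedDeriv (n - i) (fun y => Ψ (κ * y)) y|) := by
        rw [← pow_sub_mul_pow (d + y) hin, abs_mul, abs_mul, abs_mul, abs_pow, abs_neg,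
          abs_of_nonneg hc, abs_exp, Nat.abs_cast, mul_pow]
        ring
    _ ≤ n.choose i * (c * (d + y)) ^ i * exp (-c * y) * (M * ((d + y) / d)) := by gcongr
    _ = _ := by ring

lemma iteratedDeriv_three_comp_sq {F : ℝ → ℝ} (hF : ContDiff ℝ 3 F) (b : ℝ) :
    iteratedDeriv 3 (fun b => F (b ^ 2)) b =
      12 * b * iteratedDeriv 2 F (b ^ 2) + 8 * b ^ 3 * iteratedDeriv 3 F (b ^ 2) := by
  have comp_sq (m : ℕ) (hm : m < 3) (x : ℝ) : HasDerivAt (fun x => iteratedDeriv m F (x ^ 2))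
      (iteratedDeriv (m + 1) F (x ^ 2) * (2 * x)) x := by
    have hFm : HasDerivAt (iteratedDeriv m F) (iteratedDeriv (m + 1) F (x ^ 2)) (x ^ 2) := by
      rw [iteratedDeriv_succ]
      exact (hF.differentiable_iteratedDeriv m (by exact_mod_cast hm) _).hasDerivAt
    have hsq : HasDerivAt (fun x : ℝ => x ^ 2) (2 * x) x := by simpa using hasDerivAt_pow 2 x
    exact HasDerivAt.comp (h := fun x => x ^ 2) x hFm hsq
  have two_mul_id (x : ℝ) : HasDerivAt (fun x : ℝ => 2 * x) 2 x := by
    simpa using (hasDerivAt_id x).const_mul 2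
  have first_deriv : deriv (fun b => F (b ^ 2)) = fun b => iteratedDeriv 1 F (b ^ 2) * (2 * b) :=
    funext fun x => by simpa using (comp_sq 0 (by norm_num) x).deriv
  have second_deriv : deriv (fun b => iteratedDeriv 1 F (b ^ 2) * (2 * b)) = fun b =>
      iteratedDeriv 2 F (b ^ 2) * (2 * b) * (2 * b) + iteratedDeriv 1 F (b ^ 2) * 2 :=
    funext fun x => ((comp_sq 1 (by norm_num) x).mul (two_mul_id x)).deriv
  have third_deriv := ((((comp_sq 2 (by norm_num) b).mul (two_mul_id b)).mul (two_mul_id b)).add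
    ((comp_sq 1 (by norm_num) b).mul_const 2)).deriv
  rw [iteratedDeriv_succ', first_deriv, iteratedDeriv_succ', second_deriv, iteratedDeriv_one]
  refine third_deriv.trans ?_
  simp only [Pi.mul_apply, Nat.reduceAdd]
  ring

lemma one_add_pow_mul_exp_neg_le {x : ℝ} (hx : 0 ≤ x) (n : ℕ) :
    (1 + x) ^ n * exp (-x) ≤ 2 ^ n * n ! * exp ((1 - x) / 2) := by
  have pow_le : ((1 + x) / 2) ^ n ≤ n ! * exp ((1 + x) / 2) := by
    rw [← div_le_iff₀' (by positivity)]
    exact pow_div_factorial_le_exp _ (by positivity) n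
  calc (1 + x) ^ n * exp (-x) = 2 ^ n * ((1 + x) / 2) ^ n * exp (-x) := by
        rw [div_pow]; field_simp
    _ ≤ 2 ^ n * (n ! * exp ((1 + x) / 2)) * exp (-x) := by gcongr
    _ = 2 ^ n * n ! * exp ((1 - x) / 2) := by
        rw [← mul_assoc, mul_assoc (2 ^ n * (n ! : ℝ)), ← exp_add]; ring_nf

lemma div_add_sq_le_rpow_mul_rpow {b q : ℝ} (hd : 0 < d) (hb : 0 < b) (hq : q ∈ Set.Icc (-1) 1) :
    b / (d + b ^ 2) ≤ d ^ ((q - 1) / 2) * b ^ (-q) := by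
  have hq₀ : 0 ≤ (1 - q) / 2 := by linarith [hq.2]
  have hq₁ : 0 ≤ (1 + q) / 2 := by linarith [hq.1]
  have am_gm : d ^ ((1 - q) / 2) * b ^ (1 + q) ≤ d + b ^ 2 := by
    calc d ^ ((1 - q) / 2) * b ^ (1 + q) = d ^ ((1 - q) / 2) * (b ^ 2) ^ ((1 + q) / 2) := by
          rw [← rpow_natCast_mul hb.le]; push_cast; ring_nf
      _ ≤ (1 - q) / 2 * d + (1 + q) / 2 * b ^ 2 :=
          geom_mean_le_arith_mean2_weighted hq₀ hq₁ hd.le (sq_nonneg b) (by ring)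
      _ ≤ 1 * d + 1 * b ^ 2 := by gcongr <;> linarith
      _ = d + b ^ 2 := by ring
  rw [div_le_iff₀ (by positivity)]
  calc b = d ^ ((q - 1) / 2) * b ^ (-q) * (d ^ ((1 - q) / 2) * b ^ (1 + q)) := by
        rw [mul_mul_mul_comm, ← rpow_add hd, ← rpow_add hb]
        ring_nf
        simp
    _ ≤ d ^ ((q - 1) / 2) * b ^ (-q) * (d + b ^ 2) := by gcongr

lemma abs_iteratedDeriv_three_exp_mul_comp_sq_le (hΨ : ContDiff ℝ 3 Ψ)
    (hM : ∀ i ≤ 3, ∀ z, 0 ≤ z → (1 + z) ^ i * |iteratedDeriv i Ψ z| ≤ M * (1 + z))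
    (hc : 0 ≤ c) (hκ : 0 ≤ κ) (hd : 0 < d) (hκd : κ ≤ d⁻¹) {b : ℝ} (hb : 0 ≤ b) :
    |iteratedDeriv 3 (fun b => exp (-c * b ^ 2) * Ψ (κ * b ^ 2)) b| ≤
      20 * (M / d) * (b / (d + b ^ 2)) * ((1 + c * (d + b ^ 2)) ^ 3 * exp (-c * b ^ 2)) := by
  set F : ℝ → ℝ := fun y => exp (-c * y) * Ψ (κ * y)
  have hF₃ : ContDiff ℝ 3 F := by fun_prop
  set t := d + b ^ 2
  set B := M * (t / d) * (1 + c * t) ^ 3 * exp (-c * b ^ 2) with hB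
  have ht : 0 < t := by positivity
  have hbt : b ^ 2 ≤ t := le_add_of_nonneg_left hd.le
  have hM₀ : 0 ≤ M := (abs_nonneg (Ψ 0)).trans (by simpa using hM 0 (by norm_num) 0 le_rfl)
  have second_le : t ^ 2 * |iteratedDeriv 2 F (b ^ 2)| ≤ B := by
    refine (add_pow_mul_abs_iteratedDeriv_exp_mul_comp_mul_le (hΨ.of_le (by norm_num))
      (fun i hi => hM i (hi.trans (by norm_num))) hc hκ hd hκd (sq_nonneg b)).trans ?_
    rw [hB]
    gcongr
    · exact le_add_of_nonneg_right (by positivity)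
    · norm_num
  have third_le : t ^ 3 * |iteratedDeriv 3 F (b ^ 2)| ≤ B :=
    add_pow_mul_abs_iteratedDeriv_exp_mul_comp_mul_le hΨ hM hc hκ hd hκd (sq_nonneg b)
  calc |iteratedDeriv 3 (fun b => F (b ^ 2)) b|
      ≤ 12 * b * |iteratedDeriv 2 F (b ^ 2)| + 8 * (b * b ^ 2) * |iteratedDeriv 3 F (b ^ 2)| := by
        rw [iteratedDeriv_three_comp_sq hF₃, show b * b ^ 2 = b ^ 3 by ring]
        refine (abs_add_le _ _).trans_eq ?_
        rw [abs_mul (12 * b), abs_mul (8 * b ^ 3), abs_of_nonneg (by positivity : 0 ≤ 12 * b),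
          abs_of_nonneg (by positivity : 0 ≤ 8 * b ^ 3)]
    _ ≤ 12 * b * |iteratedDeriv 2 F (b ^ 2)| + 8 * (b * t) * |iteratedDeriv 3 F (b ^ 2)| := by
        gcongr
    _ = b / t ^ 2 * (12 * (t ^ 2 * |iteratedDeriv 2 F (b ^ 2)|)
          + 8 * (t ^ 3 * |iteratedDeriv 3 F (b ^ 2)|)) := by field_simp
    _ ≤ b / t ^ 2 * (12 * B + 8 * B) := by gcongr
    _ = 20 * (M / d) * (b / t) * ((1 + c * t) ^ 3 * exp (-c * b ^ 2)) := by
        rw [hB]; field_simp; ring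

lemma abs_iteratedDeriv_three_exp_mul_comp_sq_le_rpow (hΨ : ContDiff ℝ 3 Ψ)
    (hM : ∀ i ≤ 3, ∀ z, 0 ≤ z → (1 + z) ^ i * |iteratedDeriv i Ψ z| ≤ M * (1 + z))
    (hc : 0 ≤ c) (hκ : 0 ≤ κ) (hd : 0 < d) (hd₁ : d ≤ 1) (hκd : κ ≤ d⁻¹)
    {b q : ℝ} (hb : 0 < b) (hq : q ∈ Set.Icc (-1) 1) :
    |iteratedDeriv 3 (fun b => exp (-c * b ^ 2) * Ψ (κ * b ^ 2)) b| ≤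
      960 * exp ((1 + c) / 2) * (M / d) * (d ^ ((q - 1) / 2) * b ^ (-q)) *
        exp (-(c / 2) * b ^ 2) := by
  have hM₀ : 0 ≤ M := (abs_nonneg (Ψ 0)).trans (by simpa using hM 0 (by norm_num) 0 le_rfl)
  have cube_le : (1 + c * (d + b ^ 2)) ^ 3 * exp (-c * b ^ 2) ≤
      48 * exp ((1 + c) / 2) * exp (-(c / 2) * b ^ 2) := by
    calc (1 + c * (d + b ^ 2)) ^ 3 * exp (-c * b ^ 2)
        = (1 + c * (d + b ^ 2)) ^ 3 * exp (-(c * (d + b ^ 2))) * exp (c * d) := by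
          rw [mul_assoc, ← exp_add]; ring_nf
      _ ≤ 2 ^ 3 * 3 ! * exp ((1 - c * (d + b ^ 2)) / 2) * exp (c * d) := by
          gcongr ?_ * _
          exact one_add_pow_mul_exp_neg_le (by positivity) 3
      _ = 48 * exp ((1 + c * d) / 2) * exp (-(c / 2) * b ^ 2) := by
          rw [mul_assoc, mul_assoc 48, ← exp_add, ← exp_add]
          norm_num [Nat.factorial]
          ring
      _ ≤ 48 * exp ((1 + c) / 2) * exp (-(c / 2) * b ^ 2) := by
          gcongr; exact mul_le_of_le_one_right hc hd₁
  refine (abs_iteratedDeriv_three_exp_mul_comp_sq_le hΨ hM hc hκ hd hκd hb.le).trans ?_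
  calc 20 * (M / d) * (b / (d + b ^ 2)) * ((1 + c * (d + b ^ 2)) ^ 3 * exp (-c * b ^ 2))
      ≤ 20 * (M / d) * (d ^ ((q - 1) / 2) * b ^ (-q)) *
          (48 * exp ((1 + c) / 2) * exp (-(c / 2) * b ^ 2)) := by
        gcongr
        exact div_add_sq_le_rpow_mul_rpow hd hb hq
    _ = _ := by ring

end GaussianDerivatives

section Sigma

/-- The base `λ(s, r)` of the power of `k + 1 / 2` in `f_k(s, r)`. With `κ = λ / (2 |s - r|)`, the
series in `Σ^δ_{r,s}(b)` is a series in powers of `κ b ^ 2`, and `D / 2 = κ + 1 / (2 r (1 - r))`. -/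
noncomputable def sigmaRatio (s r : ℝ) : ℝ := if s < r then s / r else (1 - s) / (1 - r)

variable {δ r s : ℝ}

lemma sigmaRatio_mem_Ioc (hr : r ∈ Set.Ioo 0 1) (hs : s ∈ Set.Ioo 0 1) :
    sigmaRatio s r ∈ Set.Ioc 0 1 := by
  obtain ⟨hr₀, hr₁⟩ := hr
  obtain ⟨hs₀, hs₁⟩ := hs
  rw [sigmaRatio]
  split_ifs with hsr
  · exact ⟨div_pos hs₀ hr₀, (div_le_one hr₀).2 hsr.le⟩
  · exact ⟨div_pos (sub_pos.2 hs₁) (sub_pos.2 hr₁), (div_le_one (sub_pos.2 hr₁)).2 (by linarith)⟩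

lemma sigmaRatio_div_two_mul_abs_sub_le (hr : r ∈ Set.Ioo 0 1) (hs : s ∈ Set.Ioo 0 1) :
    sigmaRatio s r / (2 * |s - r|) ≤ |s - r|⁻¹ := by
  rw [div_mul_eq_div_div, div_eq_mul_inv _ |s - r|]
  exact mul_le_of_le_one_left (by positivity) (by linarith [(sigmaRatio_mem_Ioc hr hs).2])

lemma sqrt_mul_sqrt_sigmaRatio_le (hr : r ∈ Set.Ioo 0 1) (hs : s ∈ Set.Ioo 0 1) :
    √(2 * |s - r|) * √(sigmaRatio s r) ≤ √2 * |s - r| ^ (1 / 2 : ℝ) := by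
  rw [sqrt_mul zero_le_two, sqrt_eq_rpow |s - r|]
  exact mul_le_of_le_one_right (by positivity) (sqrt_le_one.2 (sigmaRatio_mem_Ioc hr hs).2)

lemma Dcoef_div_two_eq (hr₀ : r ≠ 0) (hr₁ : r ≠ 1) (hsr : s ≠ r) :
    Dcoef s r / 2 = sigmaRatio s r / (2 * |s - r|) + 1 / (2 * (r * (1 - r))) := by
  have hr₁ : 1 - r ≠ 0 := sub_ne_zero.2 hr₁.symm
  rw [Dcoef, sigmaRatio]
  rcases hsr.lt_or_gt with hsr | hsr
  · have : r - s ≠ 0 := (sub_pos.2 hsr).ne'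
    rw [if_pos hsr, if_pos hsr, abs_of_neg (sub_neg.2 hsr), neg_sub]
    field_simp
    ring
  · have : s - r ≠ 0 := (sub_pos.2 hsr).ne'
    rw [if_neg hsr.not_gt, if_neg hsr.not_gt, abs_of_pos (sub_pos.2 hsr)]
    field_simp
    ring

lemma rpow_half_sub_mul_rpow_add_half {x y : ℝ} (hx : 0 < x) (hy : 0 < y) (k : ℕ) :
    x ^ (1 / 2 - k : ℝ) * y ^ (k + 1 / 2 : ℝ) = √x * √y * (y / x) ^ k := by
  rw [rpow_sub hx, rpow_add hy, rpow_natCast, rpow_natCast, sqrt_eq_rpow, sqrt_eq_rpow, div_pow]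
  ring

lemma fcoef_eq (hr : r ∈ Set.Ioo 0 1) (hs : s ∈ Set.Ioo 0 1) (hsr : s ≠ r) (k : ℕ) :
    fcoef s r k = √(2 * |s - r|) * √(sigmaRatio s r) * (sigmaRatio s r / (2 * |s - r|)) ^ k := by
  have hd : 0 < 2 * |s - r| := by have := abs_pos.2 (sub_ne_zero.2 hsr); positivity
  rw [← rpow_half_sub_mul_rpow_add_half hd (sigmaRatio_mem_Ioc hr hs).1, fcoef, sigmaRatio]
  split_ifs with h
  · rw [abs_of_neg (sub_neg.2 h), neg_sub]
  · rw [abs_of_nonneg (sub_nonneg.2 (not_lt.1 h))]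

lemma Ccoef_eq_gammaRatio (k : ℕ) :
    Ccoef δ k = (Gamma (δ / 2))⁻¹ * (gammaRatio (1 / 2) (k + δ / 2) / k !) := by
  rw [Ccoef, gammaRatio, add_div, ← add_assoc]
  simp only [div_eq_mul_inv, mul_inv]
  ring

lemma SigmaRS_eq_exp_mul_poissonTransform (hr : r ∈ Set.Ioo 0 1) (hs : s ∈ Set.Ioo 0 1)
    (hsr : s ≠ r) :
    SigmaRS δ r s = fun b =>
      ((2 ^ (δ / 2 - 1) * (r * (1 - r)) ^ (δ / 2))⁻¹ * (Gamma (δ / 2))⁻¹ *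
        (√(2 * |s - r|) * √(sigmaRatio s r))) *
      (exp (-(1 / (2 * (r * (1 - r)))) * b ^ 2) *
        poissonTransform (fun k => gammaRatio (1 / 2) (k + δ / 2))
          (sigmaRatio s r / (2 * |s - r|) * b ^ 2)) := by
  funext b
  set κ := sigmaRatio s r / (2 * |s - r|)
  have exp_eq : exp (-Dcoef s r * b ^ 2 / 2) =
      exp (-(1 / (2 * (r * (1 - r)))) * b ^ 2) * exp (-(κ * b ^ 2)) := by
    rw [← exp_add]
    congr 1
    linear_combination -b ^ 2 * Dcoef_div_two_eq hr.1.ne' hr.2.ne hsr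
  have term_eq (k : ℕ) : Ccoef δ k * fcoef s r k * b ^ (2 * k) =
      (Gamma (δ / 2))⁻¹ * (√(2 * |s - r|) * √(sigmaRatio s r)) *
        (gammaRatio (1 / 2) (k + δ / 2) * ((κ * b ^ 2) ^ k / k !)) := by
    rw [Ccoef_eq_gammaRatio, fcoef_eq hr hs hsr, mul_pow, pow_mul]
    ring
  rw [SigmaRS, exp_eq, tsum_congr term_eq, tsum_mul_left, poissonTransform]
  ring

lemma exists_abs_iteratedDeriv_three_SigmaRS_le (hδ : 0 < δ) (hr : r ∈ Set.Ioo 0 1) {q : ℝ}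
    (hq : q ∈ Set.Icc (-1) 1) :
    ∃ C, ∀ s ∈ Set.Ioo 0 1, s ≠ r → ∀ b, 0 < b →
      |iteratedDeriv 3 (SigmaRS δ r s) b| ≤ C * |s - r| ^ (q / 2 - 1) *
        (b ^ (-q) * exp (-(1 / (4 * (r * (1 - r)))) * b ^ 2)) := by
  obtain ⟨M, hM⟩ := exists_one_add_pow_mul_abs_iteratedDeriv_poissonTransform_gammaRatio_le
    (ν := 1 / 2) (by norm_num) (by norm_num) (half_pos hδ) 3
  set c := 1 / (2 * (r * (1 - r))) with hc
  set K := (2 ^ (δ / 2 - 1) * (r * (1 - r)) ^ (δ / 2))⁻¹ * (Gamma (δ / 2))⁻¹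
  have hr₁ : 0 < 1 - r := sub_pos.2 hr.2
  have hr₀ : 0 < r := hr.1
  have half_rate : c / 2 = 1 / (4 * (r * (1 - r))) := by rw [hc]; field_simp; norm_num
  refine ⟨K * √2 * (960 * exp ((1 + c) / 2) * M), fun s hs hsr b hb => ?_⟩
  have hratio := (sigmaRatio_mem_Ioc hr hs).1
  have rate_le := sigmaRatio_div_two_mul_abs_sub_le hr hs
  have prefactor_le := sqrt_mul_sqrt_sigmaRatio_le hr hs
  set d := |s - r|
  have hd : 0 < d := abs_pos.2 (sub_ne_zero.2 hsr)
  have hd₁ : d ≤ 1 := abs_le.2 ⟨by linarith [hs.1, hr.2], by linarith [hs.2, hr.1]⟩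
  have rpow_mul_rpow_mul_inv : d ^ (1 / 2 : ℝ) * d ^ ((q - 1) / 2) * d⁻¹ = d ^ (q / 2 - 1) := by
    rw [← rpow_add hd, ← rpow_neg_one, ← rpow_add hd]
    ring_nf
  have deriv_le := abs_iteratedDeriv_three_exp_mul_comp_sq_le_rpow
    ((hasEntireEGF_gammaRatio (ν := 1 / 2) (by norm_num) (by norm_num)
      (half_pos hδ)).contDiff_poissonTransform 3)
    hM (by positivity : 0 ≤ c) (by positivity) hd hd₁ rate_le hb hq
  rw [SigmaRS_eq_exp_mul_poissonTransform hr hs hsr, iteratedDeriv_const_mul_field, abs_mul,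
    abs_of_nonneg (by positivity)]
  calc K * (√(2 * d) * √(sigmaRatio s r)) * _
      ≤ K * (√2 * d ^ (1 / 2 : ℝ)) * (960 * exp ((1 + c) / 2) * (M / d) *
          (d ^ ((q - 1) / 2) * b ^ (-q)) * exp (-(c / 2) * b ^ 2)) := by gcongr
    _ = K * √2 * (960 * exp ((1 + c) / 2) * M) *
          (d ^ (1 / 2 : ℝ) * d ^ ((q - 1) / 2) * d⁻¹) * (b ^ (-q) * exp (-(c / 2) * b ^ 2)) := by
        ring
    _ = _ := by rw [rpow_mul_rpow_mul_inv, half_rate]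

end Sigma

section Integration

lemma intervalIntegrable_abs_rpow {p : ℝ} (hp : -1 < p) (a b : ℝ) :
    IntervalIntegrable (fun x : ℝ => |x| ^ p) volume a b := by
  refine intervalIntegrable_of_even (fun x => by rw [abs_neg]) fun x hx => ?_
  refine (intervalIntegral.intervalIntegrable_rpow' hp).congr fun y hy => ?_
  rw [Set.uIoc_of_le hx.le] at hy
  simp only [abs_of_pos hy.1]

lemma integrableOn_abs_sub_rpow {p : ℝ} (hp : -1 < p) (r : ℝ) {a b : ℝ} (hab : a ≤ b) :
    IntegrableOn (fun x => |x - r| ^ p) (Set.Ioo a b) := by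
  have := (intervalIntegrable_abs_rpow hp (a - r) (b - r)).comp_sub_right r
  rw [sub_add_cancel, sub_add_cancel, intervalIntegrable_iff_integrableOn_Ioo_of_le hab] at this
  exact this

lemma lintegral_lintegral_ofReal_lt_top {α β : Type*} [MeasurableSpace α] [MeasurableSpace β]
    {μ : Measure α} {ν : Measure β} {F : α → β → ℝ} {g : α → ℝ} {h : β → ℝ}
    (hg : Integrable g μ) (hh : Integrable h ν) (hF : ∀ᵐ x ∂μ, ∀ᵐ y ∂ν, F x y ≤ g x * h y) :
    ∫⁻ x, ∫⁻ y, ENNReal.ofReal (F x y) ∂ν ∂μ < ⊤ := by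
  calc ∫⁻ x, ∫⁻ y, ENNReal.ofReal (F x y) ∂ν ∂μ ≤ ∫⁻ x, ∫⁻ y, ‖g x‖ₑ * ‖h y‖ₑ ∂ν ∂μ := by
        refine lintegral_mono_ae (hF.mono fun x hx => lintegral_mono_ae (hx.mono fun y hxy => ?_))
        rw [← enorm_mul]
        exact (ENNReal.ofReal_le_ofReal hxy).trans (ofReal_le_enorm _)
    _ = (∫⁻ x, ‖g x‖ₑ ∂μ) * ∫⁻ y, ‖h y‖ₑ ∂ν := lintegral_lintegral_mul hg.1.enorm hh.1.enorm
    _ < ⊤ := ENNReal.mul_lt_top hg.2 hh.2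

end Integration

theorem integrability_third_derivative_sigma (δ : ℝ) (hδ : 0 < δ)
    (r : ℝ) (hr : r ∈ Set.Ioo (0 : ℝ) 1) :
    (∫⁻ s in Set.Ioo (0:ℝ) 1, ∫⁻ b in Set.Ioi (0:ℝ),
        ENNReal.ofReal (b ^ (δ - 1) * |deriv^[3] (SigmaRS δ r s) b|)) < ⊤ := by
  have hr₁ : 0 < 1 - r := sub_pos.2 hr.2
  have hr₀ : 0 < r := hr.1
  obtain ⟨q, hq₀, hqδ, hq₁⟩ : ∃ q, 0 < q ∧ q < δ ∧ q ≤ 1 :=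
    ⟨min (δ / 2) 1, by positivity, (min_le_left _ _).trans_lt (half_lt_self hδ), min_le_right _ _⟩
  obtain ⟨C, hC⟩ := exists_abs_iteratedDeriv_three_SigmaRS_le hδ hr ⟨by linarith, hq₁⟩
  have s_integrable := integrableOn_abs_sub_rpow (by linarith : -1 < q / 2 - 1) r zero_le_one
  have b_integrable := integrableOn_rpow_mul_exp_neg_mul_sq
    (by positivity : 0 < 1 / (4 * (r * (1 - r)))) (by linarith : -1 < δ - 1 - q)
  refine lintegral_lintegral_ofReal_lt_top (s_integrable.const_mul C) b_integrable ?_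
  filter_upwards [ae_restrict_mem measurableSet_Ioo, Measure.ae_ne _ r] with s hs hsr
  filter_upwards [ae_restrict_mem measurableSet_Ioi] with b (hb : 0 < b)
  calc b ^ (δ - 1) * |deriv^[3] (SigmaRS δ r s) b|
      ≤ b ^ (δ - 1) * (C * |s - r| ^ (q / 2 - 1) *
          (b ^ (-q) * exp (-(1 / (4 * (r * (1 - r)))) * b ^ 2))) := by
        rw [← iteratedDeriv_eq_iterate]
        gcongr
        exact hC s hs hsr b hb
    _ = _ := by rw [sub_eq_add_neg _ q, rpow_add hb]; ring
end
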